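/- arXiv:cs/0510044 — 5 statements merged into one kernel-verified Lean document; each statement's English description precedes it below -/
import Mathlib

section
/- Fix σ > 0 and α > 0, and let Λ > 0 be the unique positive solution of 1/Λ = σ² + α/(1+Λ). For each integer N ≥ 1 set K = ⌈αN⌉ and let the entries s_{ia} (i ∈ [K], a ∈ [N]) be i.i.d. uniform on {+1, −1}. Then (1/K)·Tr[(I_K + σ^{−2}·S̃ᵀS̃)⁻¹] → 1/(1+Λ) in probability as N → ∞; that is, for every ε > 0, P(|(1/K)·Tr[(I_K + σ^{−2}·S̃ᵀS̃)⁻¹] − 1/(1+Λ)| > ε) → 0 as N → ∞. -/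
open Matrix

/-- Convert a Boolean matrix into a ±1 signature matrix. -/
def toSign {K N : ℕ} (s : Fin K → Fin N → Bool) : Fin K → Fin N → ℝ :=
  fun i a => if s i a then 1 else -1

/-- The N×K matrix S̃ with entries S̃_{ai} = s_{ia}/√N. -/
noncomputable def Stilde {K N : ℕ} (s : Fin K → Fin N → ℝ) : Matrix (Fin N) (Fin K) ℝ :=
  Matrix.of fun a i => s i a / Real.sqrt N

/-!
Write `m = (1/N) tr (c + S Sᵀ)⁻¹` with `c = σ²`. By the Woodbury and Sherman–Morrison formulas the
error of user `i` is `1 / (1 + sir i)`, where `sir i` is a quadratic form in the signature of `i`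
whose matrix, the inverse of the covariance of the other users, is independent of that signature.
Such a form has mean equal to the normalised trace of its matrix and variance `O(1/N)`, while
removing one user moves the trace by at most `1/c`; so the average error `g` is close to
`1 / (1 + m)` in mean square. On the other hand `1 - c m = (K/N) (1 - g)` holds exactly, hence `m`
nearly solves `c m + α (1 - 1 / (1 + m)) = 1`. This is the Tse–Hanly equation, and its left side
has slope at least `c`, so `m` is close to `Λ`.
-/

open Filter Topology
open scoped BigOperators MatrixOrder

section UniformAverage

lemma expect_expect_update {ι M : Type*} [Fintype ι] [DecidableEq ι] {X : ι → Type*}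
    [∀ i, Fintype (X i)] [AddCommMonoid M] [Module ℚ≥0 M] (i : ι) (f : (∀ i, X i) → M) :
    𝔼 s, 𝔼 x, f (Function.update s i x) = 𝔼 s, f s := by
  have swap : Function.Involutive
      fun p : (∀ i, X i) × X i ↦ (Function.update p.1 i p.2, p.1 i) := fun p ↦ by simp
  calc 𝔼 s, 𝔼 x, f (Function.update s i x)
      = 𝔼 p : (∀ i, X i) × X i, f (Function.update p.1 i p.2) :=
        (Finset.expect_product' _ _ fun s x ↦ f (Function.update s i x)).symm
    _ = 𝔼 p : (∀ i, X i) × X i, f p.1 := Fintype.expect_equiv swap.toPerm _ _ fun _ ↦ rfl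
    _ = 𝔼 s, 𝔼 _x : X i, f s := Finset.expect_product' _ _ fun s _ ↦ f s
    _ = 𝔼 s, f s := Finset.expect_congr rfl fun s _ ↦
        have : Nonempty (X i) := ⟨s i⟩
        Fintype.expect_const (f s)

lemma sq_expect_le_expect_sq {ι : Type*} (s : Finset ι) (f : ι → ℝ) :
    (𝔼 i ∈ s, f i) ^ 2 ≤ 𝔼 i ∈ s, f i ^ 2 := by
  obtain rfl | hs := s.eq_empty_or_nonempty
  · simp
  · simpa [Finset.expect_const hs] using Finset.expect_mul_sq_le_sq_mul_sq s f 1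

lemma natCard_div_card_le_expect_sq_div_sq {Ω : Type*} [Fintype Ω] {p : Ω → Prop} {f : Ω → ℝ}
    {δ : ℝ} (hδ : 0 < δ) (hf : ∀ ω, p ω → δ ≤ |f ω|) :
    (Nat.card {ω // p ω} : ℝ) / Fintype.card Ω ≤ (𝔼 ω, f ω ^ 2) / δ ^ 2 := by
  classical
  have markov : (Nat.card {ω // p ω} : ℝ) * δ ^ 2 ≤ ∑ ω, f ω ^ 2 := by
    calc (Nat.card {ω // p ω} : ℝ) * δ ^ 2 = ∑ ω with p ω, δ ^ 2 := by
          simp [Nat.card_eq_fintype_card, Fintype.card_subtype]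
      _ ≤ ∑ ω with p ω, f ω ^ 2 := Finset.sum_le_sum fun ω hω ↦ by
          rw [← sq_abs (f ω)]
          exact pow_le_pow_left₀ hδ.le (hf ω (Finset.mem_filter.1 hω).2) 2
      _ ≤ ∑ ω, f ω ^ 2 :=
        Finset.sum_le_sum_of_subset_of_nonneg (Finset.filter_subset _ _) fun _ _ _ ↦ sq_nonneg _
  rw [Fintype.expect_eq_sum_div_card, le_div_iff₀ (by positivity), div_mul_eq_mul_div]
  gcongr

end UniformAverage

section RandomSigns

variable {ι : Type*}

/-- The vector of signs `±1` encoded by `t`, one row of `toSign`. Averaging uniformly over `t` makes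
its entries independent Rademacher variables. -/
def signVec (t : ι → Bool) : ι → ℝ := fun a ↦ if t a then 1 else -1

variable [DecidableEq ι]

lemma signVec_update_of_ne {a b : ι} (h : b ≠ a) (t : ι → Bool) (x : Bool) :
    signVec (Function.update t a x) b = signVec t b := by
  simp [signVec, h]

lemma sum_mul_signVec_update {a : ι} {S : Finset ι} (ha : a ∉ S) (u : ι → ℝ) (t : ι → Bool)
    (x : Bool) :
    ∑ b ∈ S, u b * signVec (Function.update t a x) b = ∑ b ∈ S, u b * signVec t b :=
  Finset.sum_congr rfl fun _ hb ↦ by rw [signVec_update_of_ne (ne_of_mem_of_not_mem hb ha)]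

lemma sum_insert_quadratic_sub_trace {a : ι} {S : Finset ι} (ha : a ∉ S) (Q : Matrix ι ι ℝ)
    (t : ι → Bool) :
    ∑ b ∈ insert a S, ∑ d ∈ insert a S, Q b d * (signVec t b * signVec t d) -
        ∑ b ∈ insert a S, Q b b =
      signVec t a * ∑ b ∈ S, (Q a b + Q b a) * signVec t b +
        (∑ b ∈ S, ∑ d ∈ S, Q b d * (signVec t b * signVec t d) - ∑ b ∈ S, Q b b) := by
  have hsq : signVec t a * signVec t a = 1 := by cases h : t a <;> simp [signVec, h]
  have hcross : signVec t a * ∑ b ∈ S, (Q a b + Q b a) * signVec t b =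
      ∑ b ∈ S, Q a b * (signVec t a * signVec t b) +
        ∑ b ∈ S, Q b a * (signVec t b * signVec t a) := by
    rw [Finset.mul_sum, ← Finset.sum_add_distrib]
    exact Finset.sum_congr rfl fun b _ ↦ by ring
  simp only [Finset.sum_insert ha, Finset.sum_add_distrib, hsq, hcross]
  ring

variable [Fintype ι]

lemma expect_sq_signVec_mul_add (a : ι) {L R : (ι → Bool) → ℝ}
    (hL : ∀ t x, L (Function.update t a x) = L t) (hR : ∀ t x, R (Function.update t a x) = R t) :
    𝔼 t, (signVec t a * L t + R t) ^ 2 = 𝔼 t, L t ^ 2 + 𝔼 t, R t ^ 2 := by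
  rw [← expect_expect_update a, ← Finset.expect_add_distrib]
  refine Finset.expect_congr rfl fun t _ ↦ ?_
  simp only [hL, hR, signVec, Function.update_self, Fintype.expect_eq_sum_div_card,
    Fintype.sum_bool, Fintype.card_bool]
  norm_num
  ring

lemma expect_sq_sum_mul_signVec (u : ι → ℝ) (S : Finset ι) :
    𝔼 t, (∑ a ∈ S, u a * signVec t a) ^ 2 = ∑ a ∈ S, u a ^ 2 := by
  induction S using Finset.induction_on with
  | empty => simp
  | insert a S ha ih =>
    simp only [Finset.sum_insert ha, mul_comm (u a)]
    rw [expect_sq_signVec_mul_add a (fun _ _ ↦ rfl) (sum_mul_signVec_update ha u), ih,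
      Fintype.expect_const]

lemma expect_sq_sum_quadratic_sub_trace_le (Q : Matrix ι ι ℝ) (S : Finset ι) :
    𝔼 t, (∑ a ∈ S, ∑ b ∈ S, Q a b * (signVec t a * signVec t b) - ∑ a ∈ S, Q a a) ^ 2 ≤
      2 * ∑ a ∈ S, ∑ b ∈ S, Q a b ^ 2 := by
  induction S using Finset.induction_on with
  | empty => simp
  | insert a S ha ih =>
    have hrest (t : ι → Bool) (x : Bool) :
        ∑ b ∈ S, ∑ d ∈ S, Q b d * (signVec (Function.update t a x) b *
            signVec (Function.update t a x) d) - ∑ b ∈ S, Q b b =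
          ∑ b ∈ S, ∑ d ∈ S, Q b d * (signVec t b * signVec t d) - ∑ b ∈ S, Q b b := by
      congr 1
      refine Finset.sum_congr rfl fun b hb ↦ Finset.sum_congr rfl fun d hd ↦ ?_
      rw [signVec_update_of_ne (ne_of_mem_of_not_mem hb ha),
        signVec_update_of_ne (ne_of_mem_of_not_mem hd ha)]
    have hcross : ∑ b ∈ S, (Q a b + Q b a) ^ 2 ≤ 2 * (∑ b ∈ S, Q a b ^ 2 + ∑ b ∈ S, Q b a ^ 2) := by
      rw [← Finset.sum_add_distrib, Finset.mul_sum]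
      exact Finset.sum_le_sum fun b _ ↦ add_sq_le
    simp only [sum_insert_quadratic_sub_trace ha]
    rw [expect_sq_signVec_mul_add a (sum_mul_signVec_update ha _) hrest, expect_sq_sum_mul_signVec]
    simp only [Finset.sum_insert ha, Finset.sum_add_distrib]
    linarith [sq_nonneg (Q a a)]

lemma expect_sq_dotProduct_mulVec_sub_trace_le (Q : Matrix ι ι ℝ) :
    𝔼 t, (signVec t ⬝ᵥ Q *ᵥ signVec t - Q.trace) ^ 2 ≤ 2 * ∑ a, ∑ b, Q a b ^ 2 := by
  simpa only [dotProduct, mulVec, trace, diag_apply, Finset.mul_sum, mul_left_comm] using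
    expect_sq_sum_quadratic_sub_trace_le Q Finset.univ

end RandomSigns

section ResolventBounds

variable {n : Type*} [DecidableEq n] {A : Matrix n n ℝ} {c : ℝ}

lemma posDef_of_smul_one_le (hc : 0 < c) (hA : c • 1 ≤ A) : A.PosDef := by
  simpa using (PosDef.one.smul hc).add_posSemidef (le_iff.1 hA)

variable [Fintype n]

lemma mul_dotProduct_self_le (hA : c • 1 ≤ A) (w : n → ℝ) : c * (w ⬝ᵥ w) ≤ w ⬝ᵥ A *ᵥ w := by
  simpa [sub_mulVec, smul_mulVec] using (le_iff.1 hA).dotProduct_mulVec_nonneg w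

lemma mul_dotProduct_inv_mulVec_self_le (hc : 0 < c) (hA : c • 1 ≤ A) (v : n → ℝ) :
    c * (A⁻¹ *ᵥ v ⬝ᵥ A⁻¹ *ᵥ v) ≤ v ⬝ᵥ A⁻¹ *ᵥ v := by
  have hdet := (isUnit_iff_isUnit_det A).1 (posDef_of_smul_one_le hc hA).isUnit
  simpa [mulVec_mulVec, mul_nonsing_inv A hdet, dotProduct_comm _ v] using
    mul_dotProduct_self_le hA (A⁻¹ *ᵥ v)

lemma sq_mul_dotProduct_inv_mulVec_self_le (hc : 0 < c) (hA : c • 1 ≤ A) (v : n → ℝ) :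
    c ^ 2 * (A⁻¹ *ᵥ v ⬝ᵥ A⁻¹ *ᵥ v) ≤ v ⬝ᵥ v := by
  set w := A⁻¹ *ᵥ v
  have hw : c * (w ⬝ᵥ w) ≤ v ⬝ᵥ w := mul_dotProduct_inv_mulVec_self_le hc hA v
  have hsq : 0 ≤ (v - c • w) ⬝ᵥ (v - c • w) := dotProduct_self_star_nonneg (v - c • w)
  simp only [sub_dotProduct, dotProduct_sub, smul_dotProduct, dotProduct_smul, smul_eq_mul,
    dotProduct_comm w v] at hsq
  nlinarith

lemma sum_sq_inv_le (hc : 0 < c) (hA : c • 1 ≤ A) :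
    ∑ a, ∑ b, A⁻¹ a b ^ 2 ≤ Fintype.card n / c ^ 2 := by
  have hcol (b : n) : ∑ a, A⁻¹ a b ^ 2 ≤ 1 / c ^ 2 := by
    have h := sq_mul_dotProduct_inv_mulVec_self_le hc hA (Pi.single b 1)
    rw [single_one_dotProduct, Pi.single_eq_same, mulVec_single_one] at h
    rw [le_div_iff₀' (by positivity)]
    simpa only [dotProduct, col_apply, sq] using h
  calc ∑ a, ∑ b, A⁻¹ a b ^ 2 = ∑ b, ∑ a, A⁻¹ a b ^ 2 := Finset.sum_comm
    _ ≤ ∑ _b : n, 1 / c ^ 2 := Finset.sum_le_sum fun b _ ↦ hcol b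
    _ = Fintype.card n / c ^ 2 := by simp [div_eq_mul_inv]

end ResolventBounds

section RankOneUpdate

variable {n F : Type*} [Fintype n] [DecidableEq n] [Field F] {A : Matrix n n F}

lemma inv_add_vecMulVec (hA : IsUnit A) {u v : n → F} (h : 1 + v ⬝ᵥ A⁻¹ *ᵥ u ≠ 0) :
    (A + vecMulVec u v)⁻¹ =
      A⁻¹ - (1 + v ⬝ᵥ A⁻¹ *ᵥ u)⁻¹ • vecMulVec (A⁻¹ *ᵥ u) (v ᵥ* A⁻¹) := by
  have hdet := (isUnit_iff_isUnit_det A).1 hA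
  apply inv_eq_right_inv
  rw [add_mul, mul_sub, mul_sub, mul_nonsing_inv A hdet, Matrix.mul_smul, Matrix.mul_smul,
    mul_vecMulVec, mulVec_mulVec, mul_nonsing_inv A hdet, one_mulVec, vecMulVec_mul,
    vecMulVec_mul_vecMulVec, vecMulVec_smul]
  match_scalars <;> field_simp
  ring

lemma one_sub_dotProduct_inv_add_vecMulVec (hA : IsUnit A) {u v : n → F}
    (h : 1 + v ⬝ᵥ A⁻¹ *ᵥ u ≠ 0) :
    1 - v ⬝ᵥ (A + vecMulVec u v)⁻¹ *ᵥ u = 1 / (1 + v ⬝ᵥ A⁻¹ *ᵥ u) := by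
  rw [inv_add_vecMulVec hA h, sub_mulVec, smul_mulVec, vecMulVec_mulVec, dotProduct_sub,
    dotProduct_smul, op_smul_eq_smul, dotProduct_smul, ← dotProduct_mulVec]
  simp only [smul_eq_mul]
  field_simp
  ring

lemma trace_inv_sub_trace_inv_add_vecMulVec (hA : IsUnit A) {u v : n → F}
    (h : 1 + v ⬝ᵥ A⁻¹ *ᵥ u ≠ 0) :
    A⁻¹.trace - (A + vecMulVec u v)⁻¹.trace =
      (A⁻¹ *ᵥ u ⬝ᵥ v ᵥ* A⁻¹) / (1 + v ⬝ᵥ A⁻¹ *ᵥ u) := by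
  rw [inv_add_vecMulVec hA h, trace_sub, trace_smul, trace_vecMulVec, smul_eq_mul]
  ring

end RankOneUpdate

lemma trace_inv_sub_trace_inv_add_vecMulVec_self_mem_Icc {n : Type*} [Fintype n] [DecidableEq n]
    {A : Matrix n n ℝ} {c : ℝ} (hc : 0 < c) (hA : c • 1 ≤ A) (v : n → ℝ) :
    A⁻¹.trace - (A + vecMulVec v v)⁻¹.trace ∈ Set.Icc 0 (1 / c) := by
  have hpos := posDef_of_smul_one_le hc hA
  have hx : 0 ≤ v ⬝ᵥ A⁻¹ *ᵥ v := hpos.inv.posSemidef.dotProduct_mulVec_nonneg v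
  have hsymm : v ᵥ* A⁻¹ = A⁻¹ *ᵥ v := by
    rw [← mulVec_transpose, ← conjTranspose_eq_transpose_of_trivial, hpos.inv.isHermitian.eq]
  have hw : 0 ≤ A⁻¹ *ᵥ v ⬝ᵥ A⁻¹ *ᵥ v := dotProduct_self_star_nonneg (A⁻¹ *ᵥ v)
  rw [trace_inv_sub_trace_inv_add_vecMulVec hpos.isUnit (by positivity), hsymm]
  refine ⟨by positivity, ?_⟩
  rw [div_le_div_iff₀ (by positivity) hc]
  linarith [mul_dotProduct_inv_mulVec_self_le hc hA v]

section LinearMMSE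

variable {n k : Type*} [Fintype k]

/-- The average minimum mean square error per user in `y = S x + w`, with `x` standard Gaussian and
noise variance `c`; it is `0` if there are no users. -/
noncomputable def mmse [Fintype n] [DecidableEq k] (c : ℝ) (S : Matrix n k ℝ) : ℝ :=
  1 / Fintype.card k * ((1 + c⁻¹ • (Sᵀ * S))⁻¹).trace

variable [DecidableEq n]

/-- The covariance matrix of the received vector `y = S x + w` with noise variance `c`. -/
def outputCov (c : ℝ) (S : Matrix n k ℝ) : Matrix n n ℝ := c • 1 + S * Sᵀ

lemma outputCov_eq_add_vecMulVec [DecidableEq k] (c : ℝ) (S : Matrix n k ℝ) (i : k) :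
    outputCov c S = outputCov c (S.updateCol i 0) + vecMulVec (S.col i) (S.col i) := by
  rw [outputCov, outputCov, add_assoc]
  congr 1
  ext a b
  rw [Matrix.add_apply, mul_apply, mul_apply, vecMulVec_apply,
    ← Finset.sum_erase_add _ _ (Finset.mem_univ i),
    ← Finset.sum_erase (a := i) Finset.univ (by simp)]
  congr 1
  refine Finset.sum_congr rfl fun j hj ↦ ?_
  simp [updateCol_ne (Finset.ne_of_mem_erase hj)]

lemma smul_one_le_outputCov [Finite n] (c : ℝ) (S : Matrix n k ℝ) : c • 1 ≤ outputCov c S := by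
  rw [le_iff, outputCov, add_sub_cancel_left, ← conjTranspose_eq_transpose_of_trivial]
  exact posSemidef_self_mul_conjTranspose S

lemma outputCov_posDef [Finite n] {c : ℝ} (hc : 0 < c) (S : Matrix n k ℝ) :
    (outputCov c S).PosDef :=
  posDef_of_smul_one_le hc (smul_one_le_outputCov c S)

variable [Fintype n]

/-- The Stieltjes transform, at `-c`, of the empirical spectral distribution of `S * Sᵀ`. -/
noncomputable def stieltjes (c : ℝ) (S : Matrix n k ℝ) : ℝ :=
  (outputCov c S)⁻¹.trace / Fintype.card n

/-- The signal-to-interference ratio of user `i` under linear MMSE detection. User `i` is removed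
from the interference by zeroing its column, which keeps the index types unchanged. -/
noncomputable def sir [DecidableEq k] (c : ℝ) (S : Matrix n k ℝ) (i : k) : ℝ :=
  S.col i ⬝ᵥ (outputCov c (S.updateCol i 0))⁻¹ *ᵥ S.col i

variable {c : ℝ}

lemma stieltjes_nonneg (hc : 0 < c) (S : Matrix n k ℝ) : 0 ≤ stieltjes c S :=
  div_nonneg (outputCov_posDef hc S).inv.posSemidef.trace_nonneg (Nat.cast_nonneg _)

variable [DecidableEq k]

lemma sir_nonneg (hc : 0 < c) (S : Matrix n k ℝ) (i : k) : 0 ≤ sir c S i :=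
  (outputCov_posDef hc _).inv.posSemidef.dotProduct_mulVec_nonneg (S.col i)

lemma abs_stieltjes_updateCol_zero_sub_le (hc : 0 < c) (S : Matrix n k ℝ) (i : k) :
    |stieltjes c (S.updateCol i 0) - stieltjes c S| ≤ 1 / c / Fintype.card n := by
  have h := trace_inv_sub_trace_inv_add_vecMulVec_self_mem_Icc hc
    (smul_one_le_outputCov c (S.updateCol i 0)) (S.col i)
  rw [← outputCov_eq_add_vecMulVec] at h
  rw [stieltjes, stieltjes, ← sub_div, abs_div, Nat.abs_cast, abs_of_nonneg h.1]
  gcongr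
  exact h.2

lemma inv_one_add_smul_transpose_mul_self (hc : 0 < c) (S : Matrix n k ℝ) :
    (1 + c⁻¹ • (Sᵀ * S))⁻¹ = 1 - Sᵀ * (outputCov c S)⁻¹ * S := by
  have hC : (c⁻¹ • (1 : Matrix n n ℝ))⁻¹ = c • 1 := inv_eq_right_inv (by simp [smul_smul, hc.ne'])
  have hCunit : IsUnit (c⁻¹ • (1 : Matrix n n ℝ)) :=
    (PosDef.one.smul (inv_pos.2 hc)).isUnit
  have hsum : (c⁻¹ • (1 : Matrix n n ℝ))⁻¹ + S * (1 : Matrix k k ℝ)⁻¹ * Sᵀ = outputCov c S := by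
    rw [hC, inv_one, Matrix.mul_one, outputCov]
  have woodbury := add_mul_mul_inv_eq_sub 1 Sᵀ (c⁻¹ • (1 : Matrix n n ℝ)) S isUnit_one hCunit
    (hsum ▸ (outputCov_posDef hc S).isUnit)
  rw [hsum] at woodbury
  simpa using woodbury

lemma mmse_eq_expect_sir (hc : 0 < c) (S : Matrix n k ℝ) :
    mmse c S = 𝔼 i, 1 / (1 + sir c S i) := by
  have hdiag (i : k) :
      (1 - Sᵀ * (outputCov c S)⁻¹ * S : Matrix k k ℝ) i i = 1 / (1 + sir c S i) := by
    have hsir : 1 + S.col i ⬝ᵥ (outputCov c (S.updateCol i 0))⁻¹ *ᵥ S.col i ≠ 0 :=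
      (add_pos_of_pos_of_nonneg one_pos (sir_nonneg hc S i)).ne'
    rw [sir, ← one_sub_dotProduct_inv_add_vecMulVec (outputCov_posDef hc _).isUnit hsir,
      ← outputCov_eq_add_vecMulVec, Matrix.sub_apply, one_apply_eq, Matrix.mul_assoc]
    rfl
  rw [mmse, inv_one_add_smul_transpose_mul_self hc, trace, Fintype.expect_eq_sum_div_card,
    one_div_mul_eq_div]
  simp only [diag_apply, hdiag]

lemma one_sub_mul_stieltjes [Nonempty n] (hc : 0 < c) (S : Matrix n k ℝ) :
    1 - c * stieltjes c S = Fintype.card k / Fintype.card n * (1 - mmse c S) := by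
  have hcov : (outputCov c S)⁻¹ * (S * Sᵀ) = 1 - c • (outputCov c S)⁻¹ := by
    rw [← nonsing_inv_mul _ ((isUnit_iff_isUnit_det _).1 (outputCov_posDef hc S).isUnit),
      eq_sub_iff_add_eq', ← mul_smul_one, ← mul_add, ← outputCov]
  have hmul : Fintype.card k * mmse c S = ((1 + c⁻¹ • (Sᵀ * S))⁻¹).trace := by
    rw [mmse]
    cases isEmpty_or_nonempty k
    · simp [trace]
    · field_simp
  have htrace : Fintype.card k * mmse c S =
      Fintype.card k - Fintype.card n + c * (outputCov c S)⁻¹.trace := by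
    rw [hmul, inv_one_add_smul_transpose_mul_self hc, trace_sub, Matrix.mul_assoc, trace_mul_comm,
      Matrix.mul_assoc, hcov, trace_sub, trace_smul, trace_one, trace_one, smul_eq_mul]
    ring
  rw [stieltjes]
  field_simp
  linarith

end LinearMMSE

section TseHanlyEquation

variable {c α x y : ℝ}

lemma abs_one_div_one_add_sub_le {x y : ℝ} (hx : 0 ≤ x) (hy : 0 ≤ y) :
    |1 / (1 + x) - 1 / (1 + y)| ≤ |x - y| := by
  have h : 1 / (1 + x) - 1 / (1 + y) = (y - x) / ((1 + x) * (1 + y)) := by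
    field_simp
    ring
  rw [h, abs_div, abs_sub_comm x y, abs_of_pos (by positivity : 0 < (1 + x) * (1 + y))]
  exact div_le_self (abs_nonneg _) (by nlinarith [mul_nonneg hx hy])

lemma mul_abs_sub_le_abs_tse_hanly_sub (hα : 0 ≤ α) (hc : 0 ≤ c) (hx : 0 ≤ x) (hy : 0 ≤ y) :
    c * |x - y| ≤ |(c * x + α * (1 - 1 / (1 + x))) - (c * y + α * (1 - 1 / (1 + y)))| := by
  have hslope : (c * x + α * (1 - 1 / (1 + x))) - (c * y + α * (1 - 1 / (1 + y))) =
      (c + α / ((1 + x) * (1 + y))) * (x - y) := by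
    field_simp
    ring
  rw [hslope, abs_mul, abs_of_nonneg (by positivity : 0 ≤ c + α / ((1 + x) * (1 + y)))]
  gcongr
  exact le_add_of_nonneg_right (by positivity)

lemma abs_sub_one_div_one_add_le {Λ κ m g : ℝ} (hc : 0 < c) (hα : 0 ≤ α) (hΛ : 0 < Λ)
    (hTH : 1 / Λ = c + α / (1 + Λ)) (hκ : 0 ≤ κ) (hm : 0 ≤ m) (hg : 1 - c * m = κ * (1 - g)) :
    |g - 1 / (1 + Λ)| ≤ (1 + κ / c) * |g - 1 / (1 + m)| + |κ - α| / c := by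
  have hfix : c * Λ + α * (1 - 1 / (1 + Λ)) = 1 := by
    field_simp at hTH ⊢
    linarith
  have hfrac : |1 - 1 / (1 + m)| ≤ 1 := by
    have : 1 / (1 + m) ≤ 1 := div_le_one_of_le₀ (by linarith) (by positivity)
    rw [abs_of_nonneg (by linarith)]
    linarith [show 0 ≤ 1 / (1 + m) by positivity]
  have hdist : c * |m - Λ| ≤ κ * |g - 1 / (1 + m)| + |κ - α| :=
    calc c * |m - Λ| ≤ |(c * m + α * (1 - 1 / (1 + m))) - (c * Λ + α * (1 - 1 / (1 + Λ)))| :=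
          mul_abs_sub_le_abs_tse_hanly_sub hα hc.le hm hΛ.le
      _ = |κ * (g - 1 / (1 + m)) - (κ - α) * (1 - 1 / (1 + m))| := by
          rw [hfix]
          congr 1
          linear_combination -hg
      _ ≤ κ * |g - 1 / (1 + m)| + |κ - α| * |1 - 1 / (1 + m)| := by
          simpa only [abs_mul, abs_of_nonneg hκ] using
            abs_sub (κ * (g - 1 / (1 + m))) ((κ - α) * (1 - 1 / (1 + m)))
      _ ≤ κ * |g - 1 / (1 + m)| + |κ - α| := by
          gcongr
          exact mul_le_of_le_one_right (abs_nonneg _) hfrac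
  calc |g - 1 / (1 + Λ)| ≤ |g - 1 / (1 + m)| + |1 / (1 + m) - 1 / (1 + Λ)| := abs_sub_le _ _ _
    _ ≤ |g - 1 / (1 + m)| + (κ * |g - 1 / (1 + m)| + |κ - α|) / c := by
        gcongr
        exact (abs_one_div_one_add_sub_le hm hΛ.le).trans ((le_div_iff₀' hc).2 hdist)
    _ = (1 + κ / c) * |g - 1 / (1 + m)| + |κ - α| / c := by ring

end TseHanlyEquation

section RandomSignatures

variable {K N : ℕ} {c : ℝ}

lemma Stilde_toSign_col (s : Fin K → Fin N → Bool) (i : Fin K) :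
    (Stilde (toSign s)).col i = (√N)⁻¹ • signVec (s i) := by
  ext a
  exact div_eq_inv_mul _ _

lemma Stilde_toSign_update_updateCol_zero (s : Fin K → Fin N → Bool) (i : Fin K)
    (t : Fin N → Bool) :
    (Stilde (toSign (Function.update s i t))).updateCol i 0 =
      (Stilde (toSign s)).updateCol i 0 := by
  ext a j
  obtain rfl | hj := eq_or_ne j i
  · simp
  · simp [hj, Stilde, toSign]

lemma sir_Stilde_toSign_update (c : ℝ) (s : Fin K → Fin N → Bool) (i : Fin K)
    (t : Fin N → Bool) :
    sir c (Stilde (toSign (Function.update s i t))) i =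
      signVec t ⬝ᵥ (outputCov c ((Stilde (toSign s)).updateCol i 0))⁻¹ *ᵥ signVec t / N := by
  rw [sir, Stilde_toSign_update_updateCol_zero, Stilde_toSign_col, Function.update_self,
    mulVec_smul, smul_dotProduct, dotProduct_smul, smul_smul, ← mul_inv,
    Real.mul_self_sqrt N.cast_nonneg, smul_eq_mul, div_eq_inv_mul]

lemma expect_sq_sir_sub_stieltjes_updateCol_zero_le (hN : N ≠ 0) (hc : 0 < c) (i : Fin K) :
    𝔼 s : Fin K → Fin N → Bool, (sir c (Stilde (toSign s)) i -
      stieltjes c ((Stilde (toSign s)).updateCol i 0)) ^ 2 ≤ 2 / (N * c ^ 2) := by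
  have hcond (s : Fin K → Fin N → Bool) :
      𝔼 t, (sir c (Stilde (toSign (Function.update s i t))) i -
        stieltjes c ((Stilde (toSign (Function.update s i t))).updateCol i 0)) ^ 2 ≤
          2 / (N * c ^ 2) := by
    set S₀ := (Stilde (toSign s)).updateCol i 0 with hS₀
    simp only [sir_Stilde_toSign_update, Stilde_toSign_update_updateCol_zero, stieltjes,
      Fintype.card_fin, ← sub_div, div_pow, ← Finset.expect_div, ← hS₀]
    have hfrob : ∑ a, ∑ b, (outputCov c S₀)⁻¹ a b ^ 2 ≤ N / c ^ 2 := by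
      simpa using sum_sq_inv_le hc (smul_one_le_outputCov c S₀)
    calc (𝔼 t, (signVec t ⬝ᵥ (outputCov c S₀)⁻¹ *ᵥ signVec t -
            (outputCov c S₀)⁻¹.trace) ^ 2) / N ^ 2
        ≤ 2 * (N / c ^ 2) / N ^ 2 := by
          gcongr
          exact (expect_sq_dotProduct_mulVec_sub_trace_le _).trans (by gcongr)
      _ = 2 / (N * c ^ 2) := by field_simp
  rw [← expect_expect_update i]
  exact Finset.expect_le Finset.univ_nonempty fun s _ ↦ hcond s

lemma expect_sq_one_div_one_add_sir_sub_le (hN : N ≠ 0) (hc : 0 < c) (i : Fin K) :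
    𝔼 s : Fin K → Fin N → Bool, (1 / (1 + sir c (Stilde (toSign s)) i) -
      1 / (1 + stieltjes c (Stilde (toSign s)))) ^ 2 ≤ 6 / (N * c ^ 2) := by
  have hpt (S : Matrix (Fin N) (Fin K) ℝ) :
      (1 / (1 + sir c S i) - 1 / (1 + stieltjes c S)) ^ 2 ≤
        2 * ((sir c S i - stieltjes c (S.updateCol i 0)) ^ 2 + 1 / (N * c ^ 2)) := by
    have hremove : (stieltjes c (S.updateCol i 0) - stieltjes c S) ^ 2 ≤ 1 / (N * c ^ 2) :=
      calc (stieltjes c (S.updateCol i 0) - stieltjes c S) ^ 2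
          ≤ (1 / c / N) ^ 2 := by
            rw [← sq_abs]
            gcongr
            simpa using abs_stieltjes_updateCol_zero_sub_le hc S i
        _ = 1 / (N ^ 2 * c ^ 2) := by field_simp
        _ ≤ 1 / (N * c ^ 2) := by
            gcongr
            exact_mod_cast Nat.le_self_pow two_ne_zero N
    calc (1 / (1 + sir c S i) - 1 / (1 + stieltjes c S)) ^ 2
        ≤ (sir c S i - stieltjes c S) ^ 2 :=
          sq_le_sq.2 (abs_one_div_one_add_sub_le (sir_nonneg hc S i) (stieltjes_nonneg hc S))
      _ = ((sir c S i - stieltjes c (S.updateCol i 0)) +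
            (stieltjes c (S.updateCol i 0) - stieltjes c S)) ^ 2 := by ring
      _ ≤ 2 * ((sir c S i - stieltjes c (S.updateCol i 0)) ^ 2 +
            (stieltjes c (S.updateCol i 0) - stieltjes c S) ^ 2) := add_sq_le
      _ ≤ _ := by gcongr
  calc 𝔼 s : Fin K → Fin N → Bool, (1 / (1 + sir c (Stilde (toSign s)) i) -
        1 / (1 + stieltjes c (Stilde (toSign s)))) ^ 2
      ≤ 2 * (𝔼 s : Fin K → Fin N → Bool, (sir c (Stilde (toSign s)) i -
          stieltjes c ((Stilde (toSign s)).updateCol i 0)) ^ 2 + 1 / (N * c ^ 2)) := by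
        rw [← Fintype.expect_const (ι := Fin K → Fin N → Bool) (1 / (N * c ^ 2)),
          ← Finset.expect_add_distrib, Finset.mul_expect]
        exact Finset.expect_le_expect fun s _ ↦ hpt _
    _ ≤ 2 * (2 / (N * c ^ 2) + 1 / (N * c ^ 2)) := by
        gcongr
        exact expect_sq_sir_sub_stieltjes_updateCol_zero_le hN hc i
    _ = 6 / (N * c ^ 2) := by ring

lemma expect_sq_mmse_sub_le (hK : K ≠ 0) (hN : N ≠ 0) (hc : 0 < c) :
    𝔼 s : Fin K → Fin N → Bool, (mmse c (Stilde (toSign s)) -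
      1 / (1 + stieltjes c (Stilde (toSign s)))) ^ 2 ≤ 6 / (N * c ^ 2) := by
  have : NeZero K := ⟨hK⟩
  have hmean (S : Matrix (Fin N) (Fin K) ℝ) : mmse c S - 1 / (1 + stieltjes c S) =
      𝔼 i, (1 / (1 + sir c S i) - 1 / (1 + stieltjes c S)) := by
    rw [Finset.expect_sub_distrib, Fintype.expect_const, mmse_eq_expect_sir hc]
  simp only [hmean]
  calc 𝔼 s : Fin K → Fin N → Bool, (𝔼 i, (1 / (1 + sir c (Stilde (toSign s)) i) -
        1 / (1 + stieltjes c (Stilde (toSign s))))) ^ 2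
      ≤ 𝔼 s : Fin K → Fin N → Bool, 𝔼 i, (1 / (1 + sir c (Stilde (toSign s)) i) -
        1 / (1 + stieltjes c (Stilde (toSign s)))) ^ 2 :=
        Finset.expect_le_expect fun s _ ↦ sq_expect_le_expect_sq _ _
    _ = 𝔼 i, 𝔼 s : Fin K → Fin N → Bool, (1 / (1 + sir c (Stilde (toSign s)) i) -
        1 / (1 + stieltjes c (Stilde (toSign s)))) ^ 2 := Finset.expect_comm _ _ _
    _ ≤ 6 / (N * c ^ 2) := Finset.expect_le Finset.univ_nonempty fun i _ ↦
        expect_sq_one_div_one_add_sir_sub_le hN hc i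

lemma natCard_lt_abs_mmse_sub_div_le {α Λ δ ε : ℝ} (hK : K ≠ 0) (hN : N ≠ 0) (hc : 0 < c)
    (hα : 0 ≤ α) (hΛ : 0 < Λ) (hTH : 1 / Λ = c + α / (1 + Λ)) (hδ : 0 < δ)
    (hε : (1 + K / N / c) * δ + |(K / N : ℝ) - α| / c ≤ ε) :
    (Nat.card {s : Fin K → Fin N → Bool //
      ε < |mmse c (Stilde (toSign s)) - 1 / (1 + Λ)|} : ℝ) / 2 ^ (K * N) ≤
        6 / (N * c ^ 2) / δ ^ 2 := by
  have : NeZero N := ⟨hN⟩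
  have hdev (s : Fin K → Fin N → Bool) (hs : ε < |mmse c (Stilde (toSign s)) - 1 / (1 + Λ)|) :
      δ ≤ |mmse c (Stilde (toSign s)) - 1 / (1 + stieltjes c (Stilde (toSign s)))| := by
    have htrace : 1 - c * stieltjes c (Stilde (toSign s)) =
        K / N * (1 - mmse c (Stilde (toSign s))) := by
      simpa only [Fintype.card_fin] using one_sub_mul_stieltjes hc (Stilde (toSign s))
    have hstab := abs_sub_one_div_one_add_le hc hα hΛ hTH (by positivity)
      (stieltjes_nonneg hc (Stilde (toSign s))) htrace
    exact le_of_mul_le_mul_left (by linarith) (by positivity : 0 < 1 + K / N / c)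
  have hcard : (Fintype.card (Fin K → Fin N → Bool) : ℝ) = 2 ^ (K * N) := by
    simp [pow_mul']
  rw [← hcard]
  refine (natCard_div_card_le_expect_sq_div_sq hδ hdev).trans ?_
  gcongr
  exact expect_sq_mmse_sub_le hK hN hc

end RandomSignatures

theorem average_mmse_tendsto_tse_hanly_general {c α Λ : ℝ} (hc : 0 < c) (hΛ : 0 < Λ)
    (hTH : 1 / Λ = c + α / (1 + Λ)) {K : ℕ → ℕ} (hK : ∀ᶠ N in atTop, K N ≠ 0)
    (hKα : Tendsto (fun N ↦ (K N / N : ℝ)) atTop (𝓝 α)) {ε : ℝ} (hε : 0 < ε) :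
    Tendsto (fun N ↦ (Nat.card {s : Fin (K N) → Fin N → Bool //
      ε < |mmse c (Stilde (toSign s)) - 1 / (1 + Λ)|} : ℝ) / 2 ^ (K N * N)) atTop (𝓝 0) := by
  have hα : 0 ≤ α := ge_of_tendsto' hKα fun N ↦ by positivity
  obtain ⟨δ, hδ, hδε⟩ : ∃ δ > 0, (1 + α / c) * δ < ε :=
    ⟨ε / 2 / (1 + α / c), by positivity, by field_simp; linarith⟩
  have hdev : Tendsto (fun N ↦ (1 + K N / N / c) * δ + |(K N / N : ℝ) - α| / c) atTop
      (𝓝 ((1 + α / c) * δ)) := by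
    simpa using (((hKα.div_const c).const_add 1).mul_const δ).add
      ((hKα.sub_const α).abs.div_const c)
  have hbound : Tendsto (fun N : ℕ ↦ 6 / (N * c ^ 2) / δ ^ 2) atTop (𝓝 0) := by
    have h := (tendsto_inv_atTop_nhds_zero_nat (𝕜 := ℝ)).const_mul (6 / (c ^ 2 * δ ^ 2))
    rw [mul_zero] at h
    exact h.congr fun N ↦ by field_simp
  refine squeeze_zero' (.of_forall fun N ↦ by positivity) ?_ hbound
  filter_upwards [hK, eventually_ne_atTop 0, hdev.eventually_le_const hδε] with N hK hN hN_le
  exact natCard_lt_abs_mmse_sub_div_le hK hN hc hα hΛ hTH hδ hN_le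

/-- **Tse–Hanly formula.** With K = ⌈αN⌉ and i.i.d. uniform ±1
signatures, the per-user MMSE (1/K)·Tr[(I + σ⁻²S̃ᵀS̃)⁻¹] converges in probability to
1/(1+Λ), where Λ is the unique positive solution of 1/Λ = σ² + α/(1+Λ). -/
theorem average_mmse_tendsto_tse_hanly (σ α Λ : ℝ) (hσ : 0 < σ) (hα : 0 < α)
    (hΛ : 0 < Λ) (hTH : 1 / Λ = σ ^ 2 + α / (1 + Λ)) :
    ∀ ε : ℝ, 0 < ε →
      Filter.Tendsto
        (fun N : ℕ =>
          (Nat.card {s : Fin ⌈α * (N : ℝ)⌉₊ → Fin N → Bool //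
            ε < |(1 / (⌈α * (N : ℝ)⌉₊ : ℝ)) *
                ((1 + (σ ^ 2)⁻¹ • ((Stilde (toSign s))ᵀ * Stilde (toSign s)) :
                  Matrix (Fin ⌈α * (N : ℝ)⌉₊) (Fin ⌈α * (N : ℝ)⌉₊) ℝ)⁻¹).trace -
                1 / (1 + Λ)|} : ℝ) /
            2 ^ (⌈α * (N : ℝ)⌉₊ * N))
        Filter.atTop (nhds 0) := by
  intro ε hε
  have hratio : Tendsto (fun N : ℕ ↦ (⌈α * (N : ℝ)⌉₊ / N : ℝ)) atTop (𝓝 α) :=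
    (tendsto_nat_ceil_mul_div_atTop hα.le).comp tendsto_natCast_atTop_atTop
  have hpos : ∀ᶠ N : ℕ in atTop, ⌈α * (N : ℝ)⌉₊ ≠ 0 := by
    filter_upwards [eventually_gt_atTop 0] with N hN
    exact (Nat.ceil_pos.2 (by positivity)).ne'
  simpa only [mmse, Fintype.card_fin] using
    average_mmse_tendsto_tse_hanly_general (pow_pos hσ 2) hΛ hTH hpos hratio hε
end

section
/- Fix σ > 0, α > 0, and an integer t ≥ 1. There is a constant C = C(t, α, σ) such that the following holds for every integer N ≥ 2 with K = ⌈αN⌉ and s a K×N matrix with i.i.d. entries uniform on {+1, −1}. Let λ*_N > 1 be the unique positive fixed point of λ ↦ 1 + ((N−1)/N)/(σ² + ((K−1)/N)/λ), let λ̂*_N = σ² + ((K−1)/N)/λ*_N, and let L^{(∞)}_N = 1 + 1/λ̂*_N. For a user node i ∈ [K], define δ_i^{(t)} = (1/L^{(∞)}_N)·(−1/(N·λ*_N·λ̂*_N))^t · Σ_π ∏_{r=1}^{t} s_{i_{r−1}, a_r}·s_{i_r, a_r}, where the sum runs over all closed non-reversing walks π = (i = i_0, a_1, i_1, a_2, ...,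 a_t, i_t = i) of length 2t based at i (with i_r ∈ [K], a_r ∈ [N], i_r ≠ i_{r−1} for 1 ≤ r ≤ t, and a_{r+1} ≠ a_r for 1 ≤ r ≤ t−1). Then E[(δ_i^{(t)})²] ≤ C/N; in particular E[(δ_i^{(t)})²] → 0 as N → ∞. -/
open Finset

/-- The set of closed non-reversing walks of length 2t based at user node `i0` on the
complete bipartite graph with K user nodes and N chip nodes: a walk is a pair of
sequences (i₀, i₁, ..., i_t) of user nodes and (a₁, ..., a_t) of chip nodes with
i₀ = i_t = i0, iᵣ ≠ iᵣ₋₁, and aᵣ₊₁ ≠ aᵣ. -/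
def walkSet (K N t : ℕ) (i0 : Fin K) :
    Finset ((Fin (t + 1) → Fin K) × (Fin t → Fin N)) :=
  Finset.univ.filter fun p =>
    p.1 0 = i0 ∧ p.1 (Fin.last t) = i0 ∧
    (∀ r : Fin t, p.1 r.castSucc ≠ p.1 r.succ) ∧
    (∀ r r' : Fin t, (r : ℕ) + 1 = (r' : ℕ) → p.2 r ≠ p.2 r')

/-- The length-2t term δ_i^{(t)} of the Freeman–Weiss path-sum expression:
δ_i^{(t)} = (1/L^∞)·(−1/(N·λ*·λ̂*))ᵗ · Σ_π ∏_{r=1}^t s_{i_{r−1} a_r}·s_{i_r a_r}. -/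
noncomputable def deltaPath (K N t : ℕ) (lamS lamH Linf : ℝ)
    (s : Fin K → Fin N → ℝ) (i0 : Fin K) : ℝ :=
  (1 / Linf) * (-(1 / ((N : ℝ) * lamS * lamH))) ^ t *
    ∑ p ∈ walkSet K N t i0,
      ∏ r : Fin t, s (p.1 r.castSucc) (p.2 r) * s (p.1 r.succ) (p.2 r)

/-- The finite-size BP variance fixed-point map λ ↦ 1 + ((N−1)/N)/(σ² + ((K−1)/N)/λ). -/
noncomputable def bpVarMap (σ : ℝ) (K N : ℕ) (l : ℝ) : ℝ :=
  1 + (((N : ℝ) - 1) / (N : ℝ)) / (σ ^ 2 + (((K : ℝ) - 1) / (N : ℝ)) / l)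

/-- λ̂*_N = σ² + ((K−1)/N)/λ*_N. -/
noncomputable def lamHatStar (σ : ℝ) (K N : ℕ) (lamStar : ℝ) : ℝ :=
  σ ^ 2 + (((K : ℝ) - 1) / (N : ℝ)) / lamStar

/-! The second moment is a sum over pairs of walks `(p, q)`. Flipping the sign of one matrix entry
shows that a pair contributes only if every edge of its concatenation, a closed walk with `4t`
steps, is traversed at least twice; so at most `2t` distinct edges occur. Each newly visited vertex
is reached along a new edge, and the non-reversing walk `p` moreover has to close a cycle, which
uses an edge leading to no new vertex. Hence at most `2t` vertices are visited, one of which is the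
base point, and there are `O((K + N) ^ (2t - 1))` contributing pairs. The prefactor is
`O(N ^ (-2t))` because `λ* ≥ 1` and `λ̂* ≥ σ²`. -/

section Repetition

variable {ι β : Type*} {e : ι → β} {J : Finset ι}

/-- Every value that `e` takes on `J` is taken at least twice. For the edge sequence of a walk this
says that no edge is traversed exactly once. -/
def RepeatsOn (e : ι → β) (J : Finset ι) : Prop :=
  ∀ j ∈ J, ∃ k ∈ J, k ≠ j ∧ e k = e j

lemma RepeatsOn.two_mul_card_image_le [DecidableEq β] (h : RepeatsOn e J) :
    2 * #(J.image e) ≤ #J := by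
  refine mul_card_image_le_card J 2 fun b hb ↦ ?_
  obtain ⟨j, hj, rfl⟩ := mem_image.1 hb
  obtain ⟨k, hk, hkj, he⟩ := h j hj
  exact one_lt_card.2 ⟨k, by simp [hk, he], j, by simp [hj], hkj⟩

end Repetition

section VertexSequence

variable {V : Type*}

/-- The undirected edge traversed by the vertex sequence `w` between times `j` and `j + 1`. -/
def stepEdge (w : ℕ → V) (j : ℕ) : Sym2 V := s(w j, w (j + 1))

/-- The step from time `j` to time `j + 1` reaches a vertex that `w` has not visited before. -/
def IsFreshStep (w : ℕ → V) (j : ℕ) : Prop := ∀ k ≤ j, w k ≠ w (j + 1)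

lemma IsFreshStep.stepEdge_ne {w : ℕ → V} {i j : ℕ} (hj : IsFreshStep w j) (hij : i < j) :
    stepEdge w i ≠ stepEdge w j := by
  intro he
  rcases Sym2.eq_iff.1 he with ⟨-, h⟩ | ⟨h, -⟩
  · exact hj (i + 1) hij h
  · exact hj i hij.le h

lemma injOn_stepEdge_setOf_isFreshStep (w : ℕ → V) :
    Set.InjOn (stepEdge w) {j | IsFreshStep w j} := by
  intro i hi j hj he
  rcases lt_trichotomy i j with h | h | h
  · exact absurd he (hj.stepEdge_ne h)
  · exact h
  · exact absurd he.symm (hi.stepEdge_ne h)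

open Classical in
lemma card_image_range_succ_eq_card_isFreshStep (w : ℕ → V) (m : ℕ) :
    #((range (m + 1)).image w) = #{j ∈ range m | IsFreshStep w j} + 1 := by
  induction m with
  | zero => simp
  | succ m ih =>
    have hmem : w (m + 1) ∈ (range (m + 1)).image w ↔ ¬ IsFreshStep w m := by
      simp [IsFreshStep]
    rw [range_add_one (n := m + 1), image_insert, range_add_one (n := m), filter_insert,
      ← range_add_one]
    by_cases hm : IsFreshStep w m
    · rw [if_pos hm, card_insert_of_notMem (by simpa [hmem] using hm),
        card_insert_of_notMem (by simp), ih]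
    · rw [if_neg hm, insert_eq_of_mem (hmem.2 hm), ih]

/-- The witness is the first step back to a visited vertex: all earlier steps being fresh, its edge
can only repeat the edge of the step just before it, and that would be a reversal. -/
lemma exists_stepEdge_ne_of_isFreshStep {w : ℕ → V} {n : ℕ} (hn : n ≠ 0) (hclosed : w n = w 0)
    (hnonrev : ∀ j, j + 2 ≤ n → w j ≠ w (j + 2)) :
    ∃ k < n, ∀ j, IsFreshStep w j → stepEdge w j ≠ stepEdge w k := by
  classical
  have hex : ∃ k, k < n ∧ ¬ IsFreshStep w k := by
    refine ⟨n - 1, by omega, fun h ↦ h 0 (Nat.zero_le _) ?_⟩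
    rw [Nat.sub_one_add_one hn, hclosed]
  obtain ⟨k, ⟨hkn, hk⟩, hmin⟩ : ∃ k, (k < n ∧ ¬ IsFreshStep w k) ∧ ∀ i < k, IsFreshStep w i :=
    ⟨Nat.find hex, Nat.find_spec hex, fun i hi ↦ by
      have := Nat.find_min hex hi
      have := (Nat.find_spec hex).1
      grind⟩
  have hdistinct : ∀ i < k, w i ≠ w k := fun i hi h ↦
    hmin (k - 1) (by omega) i (by omega) (by rw [h, Nat.sub_add_cancel (by omega)])
  refine ⟨k, hkn, fun j hj he ↦ ?_⟩
  rcases lt_trichotomy j k with h | rfl | h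
  · rcases Sym2.eq_iff.1 he with ⟨h₁, -⟩ | ⟨h₁, h₂⟩
    · exact hdistinct j h h₁
    · obtain rfl : j + 1 = k := by
        by_contra hne
        exact hdistinct (j + 1) (by omega) h₂
      exact hnonrev j hkn h₁
  · exact hk hj
  · exact hj.stepEdge_ne h he.symm

lemma card_vertices_le_card_edges [DecidableEq V] {w : ℕ → V} {n m : ℕ} (hn : n ≠ 0) (hnm : n ≤ m)
    (hclosed : w n = w 0) (hnonrev : ∀ j, j + 2 ≤ n → w j ≠ w (j + 2)) :
    #((range (m + 1)).image w) ≤ #((range m).image (stepEdge w)) := by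
  classical
  obtain ⟨k, hkn, hk⟩ := exists_stepEdge_ne_of_isFreshStep hn hclosed hnonrev
  set F := {j ∈ range m | IsFreshStep w j}
  have hinj : Set.InjOn (stepEdge w) F :=
    (injOn_stepEdge_setOf_isFreshStep w).mono fun j hj ↦ (mem_filter.1 hj).2
  have hnotMem : stepEdge w k ∉ F.image (stepEdge w) := by
    rw [mem_image]
    rintro ⟨j, hj, he⟩
    exact hk j (mem_filter.1 hj).2 he
  calc #((range (m + 1)).image w)
      = #F + 1 := by convert card_image_range_succ_eq_card_isFreshStep w m
    _ = #(insert (stepEdge w k) (F.image (stepEdge w))) := by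
        rw [card_insert_of_notMem hnotMem, card_image_of_injOn hinj]
    _ ≤ #((range m).image (stepEdge w)) :=
        card_le_card <| insert_subset
          (mem_image_of_mem _ <| mem_range.2 <| hkn.trans_le hnm)
          (image_subset_image <| filter_subset _ _)

end VertexSequence

section Counting

variable {ι V : Type*} [Fintype ι] [DecidableEq V]

lemma exists_eq_elim_of_card_image_erase_le {w : ι → V} {v₀ : V} {d : ℕ}
    (hw : #((univ.image w).erase v₀) ≤ d) :
    ∃ (c : ι → Option (Fin d)) (g : Fin d → V), w = fun j ↦ (c j).elim v₀ g := by
  set S := (univ.image w).erase v₀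
  obtain ⟨f⟩ : Nonempty (S ↪ Fin d) :=
    Function.Embedding.nonempty_of_card_le (by simpa using hw)
  refine ⟨fun j ↦ if hj : w j ∈ S then some (f ⟨w j, hj⟩) else none,
    Function.extend f Subtype.val fun _ ↦ v₀, funext fun j ↦ ?_⟩
  by_cases hj : w j ∈ S
  · simp [hj, f.injective.extend_apply]
  · simp only [dif_neg hj, Option.elim_none]
    simpa [S] using hj

lemma card_filter_card_image_erase_le [DecidableEq ι] [Fintype V] (v₀ : V) (d : ℕ) :
    #{w : ι → V | #((univ.image w).erase v₀) ≤ d} ≤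
      (d + 1) ^ Fintype.card ι * Fintype.card V ^ d := by
  calc #{w : ι → V | #((univ.image w).erase v₀) ≤ d}
      ≤ #(univ.image fun (x : (ι → Option (Fin d)) × (Fin d → V)) (j : ι) ↦
          (x.1 j).elim v₀ x.2) := by
        refine card_le_card fun w hw ↦ ?_
        obtain ⟨c, g, rfl⟩ := exists_eq_elim_of_card_image_erase_le (mem_filter.1 hw).2
        exact mem_image_of_mem _ (mem_univ (c, g))
    _ ≤ Fintype.card ((ι → Option (Fin d)) × (Fin d → V)) := card_image_le
    _ = (d + 1) ^ Fintype.card ι * Fintype.card V ^ d := by simp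

end Counting

section Interleaving

variable {X A B : Type*}

/-- The sequence `f 0, g 0, f 1, g 1, …`. -/
def interleave (f g : ℕ → X) (j : ℕ) : X := if Even j then f (j / 2) else g (j / 2)

lemma interleave_two_mul (f g : ℕ → X) (r : ℕ) : interleave f g (2 * r) = f r := by
  simp [interleave]

lemma interleave_two_mul_add_one (f g : ℕ → X) (r : ℕ) : interleave f g (2 * r + 1) = g r := by
  simp [interleave, Nat.mul_add_div]

lemma prod_range_two_mul_interleave {M : Type*} [CommMonoid M] (φ : X → M) (f g : ℕ → X) (n : ℕ) :
    ∏ j ∈ range (2 * n), φ (interleave f g j) = ∏ r ∈ range n, φ (f r) * φ (g r) := by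
  induction n with
  | zero => simp
  | succ n ih =>
    rw [mul_add_one, prod_range_succ, prod_range_succ, ih, prod_range_succ, interleave_two_mul,
      interleave_two_mul_add_one, mul_assoc]

/-- The vertices `u 0, c 0, u 1, c 1, …` of the walk in the complete bipartite graph on `A ⊕ B`
that visits the users `u` and the chips `c` alternately. -/
def walkVertex (u : ℕ → A) (c : ℕ → B) : ℕ → A ⊕ B :=
  interleave (fun r ↦ Sum.inl (u r)) fun r ↦ Sum.inr (c r)

/-- The edges of the same walk, recorded as (user, chip) pairs, that is, as matrix positions. -/
def walkEdge (u : ℕ → A) (c : ℕ → B) : ℕ → A × B :=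
  interleave (fun r ↦ (u r, c r)) fun r ↦ (u (r + 1), c r)

lemma stepEdge_walkVertex (u : ℕ → A) (c : ℕ → B) (j : ℕ) :
    stepEdge (walkVertex u c) j = s(Sum.inl (walkEdge u c j).1, Sum.inr (walkEdge u c j).2) := by
  unfold stepEdge walkVertex walkEdge
  rcases Nat.even_or_odd' j with ⟨r, rfl | rfl⟩
  · simp only [interleave_two_mul, interleave_two_mul_add_one]
  · rw [show 2 * r + 1 + 1 = 2 * (r + 1) by ring]
    simp only [interleave_two_mul, interleave_two_mul_add_one]
    exact Sym2.eq_swap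

lemma walkVertex_ne_add_two {u : ℕ → A} {c : ℕ → B} {t : ℕ} (hu : ∀ r < t, u r ≠ u (r + 1))
    (hc : ∀ r, r + 1 < t → c r ≠ c (r + 1)) (j : ℕ) (hj : j + 2 ≤ 2 * t) :
    walkVertex u c j ≠ walkVertex u c (j + 2) := by
  unfold walkVertex
  rcases Nat.even_or_odd' j with ⟨r, rfl | rfl⟩
  · rw [show 2 * r + 2 = 2 * (r + 1) by ring, interleave_two_mul, interleave_two_mul]
    exact Sum.inl_injective.ne (hu r (by omega))
  · rw [show 2 * r + 1 + 2 = 2 * (r + 1) + 1 by ring, interleave_two_mul_add_one,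
      interleave_two_mul_add_one]
    exact Sum.inr_injective.ne (hc r (by omega))

lemma card_image_walkVertex_le [DecidableEq A] [DecidableEq B] {u : ℕ → A} {c : ℕ → B} {t n : ℕ}
    (ht : t ≠ 0) (htn : t ≤ n) (hclosed : u t = u 0) (hu : ∀ r < t, u r ≠ u (r + 1))
    (hc : ∀ r, r + 1 < t → c r ≠ c (r + 1)) (h : RepeatsOn (walkEdge u c) (range (2 * n))) :
    #((range (2 * n + 1)).image (walkVertex u c)) ≤ n := by
  have hrepeats : RepeatsOn (stepEdge (walkVertex u c)) (range (2 * n)) := fun j hj ↦ by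
    obtain ⟨k, hk, hkj, he⟩ := h j hj
    exact ⟨k, hk, hkj, by rw [stepEdge_walkVertex, stepEdge_walkVertex, he]⟩
  have hvertices : #((range (2 * n + 1)).image (walkVertex u c)) ≤
      #((range (2 * n)).image (stepEdge (walkVertex u c))) := by
    refine card_vertices_le_card_edges (n := 2 * t) (by omega) (by omega) ?_
      (walkVertex_ne_add_two hu hc)
    rw [walkVertex, interleave_two_mul, hclosed, interleave, if_pos Even.zero]
  have hedges := hrepeats.two_mul_card_image_le
  rw [card_range] at hedges
  omega

end Interleaving

section Splicing

variable {X : Type*} {n m : ℕ} [NeZero n] [NeZero m]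

/-- The sequence that follows `f` up to time `t` and restarts with `g 0` at time `t`. Out of range
indices are reduced modulo the length, since `Fin.ofNat` does so. -/
def splice (t : ℕ) (f : Fin n → X) (g : Fin m → X) (r : ℕ) : X :=
  if r < t then f (Fin.ofNat n r) else g (Fin.ofNat m (r - t))

lemma splice_of_lt {t : ℕ} (f : Fin n → X) (g : Fin m → X) {r : Fin n} (hr : r < t) :
    splice t f g r = f r := by
  simp [splice, hr]

lemma splice_add (t : ℕ) (f : Fin n → X) (g : Fin m → X) (r : Fin m) :
    splice t f g (t + r) = g r := by
  simp [splice]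

lemma splice_of_last_eq {t : ℕ} {f : Fin (t + 1) → X} {g : Fin m → X} (h : f (Fin.last t) = g 0)
    (r : Fin (t + 1)) : splice t f g r = f r := by
  induction r using Fin.lastCases with
  | last => simpa [h] using splice_add t f g 0
  | cast r => exact splice_of_lt f g r.2

end Splicing

section WalkPair

variable {K N t : ℕ}

/-- The data of a walk of length `2t` as in `walkSet`: the users `i₀, …, i_t` and the chips
`a₁, …, a_t`, the latter indexed from `0`. -/
abbrev WalkData (K N t : ℕ) := (Fin (t + 1) → Fin K) × (Fin t → Fin N)

/-- The product of the matrix entries along a walk, the summand of `deltaPath`. -/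
def walkWeight (s : Fin K → Fin N → ℝ) (p : WalkData K N t) : ℝ :=
  ∏ r : Fin t, s (p.1 r.castSucc) (p.2 r) * s (p.1 r.succ) (p.2 r)

/-- The vertices visited by two walks, without the time ordering. -/
def pairVertices (x : WalkData K N t × WalkData K N t) :
    (Fin (t + 1) ⊕ Fin t) ⊕ (Fin (t + 1) ⊕ Fin t) → Fin K ⊕ Fin N :=
  Sum.elim (Sum.map x.1.1 x.1.2) (Sum.map x.2.1 x.2.2)

lemma pairVertices_injective : Function.Injective (pairVertices (K := K) (N := N) (t := t)) := by
  intro x y hxy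
  refine Prod.ext (Prod.ext ?_ ?_) (Prod.ext ?_ ?_) <;> funext r
  · simpa [pairVertices] using congrFun hxy (.inl (.inl r))
  · simpa [pairVertices] using congrFun hxy (.inl (.inr r))
  · simpa [pairVertices] using congrFun hxy (.inr (.inl r))
  · simpa [pairVertices] using congrFun hxy (.inr (.inr r))

variable [NeZero t]

/-- The users visited by the concatenation of two walks. -/
def concatUsers (x : WalkData K N t × WalkData K N t) : ℕ → Fin K := splice t x.1.1 x.2.1

/-- The chips visited by the concatenation of two walks. -/
def concatChips (x : WalkData K N t × WalkData K N t) : ℕ → Fin N := splice t x.1.2 x.2.2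

/-- The edges traversed by the concatenation of two walks. -/
def concatEdge (x : WalkData K N t × WalkData K N t) : ℕ → Fin K × Fin N :=
  walkEdge (concatUsers x) (concatChips x)

variable {x : WalkData K N t × WalkData K N t}

lemma walkWeight_mul_walkWeight (s : Fin K → Fin N → ℝ) (h : x.1.1 (Fin.last t) = x.2.1 0) :
    walkWeight s x.1 * walkWeight s x.2 =
      ∏ j ∈ range (2 * (t + t)), s (concatEdge x j).1 (concatEdge x j).2 := by
  unfold concatEdge walkEdge
  rw [prod_range_two_mul_interleave (fun e : Fin K × Fin N ↦ s e.1 e.2), prod_range_add,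
    prod_range, prod_range]
  unfold walkWeight concatUsers concatChips
  congr 1 <;> refine prod_congr rfl fun r _ ↦ ?_
  · rw [splice_of_lt _ _ r.2, ← splice_of_last_eq h r.castSucc, ← splice_of_last_eq h r.succ,
      Fin.val_castSucc, Fin.val_succ]
  · rw [splice_add, ← splice_add t x.1.1 x.2.1 r.castSucc, ← splice_add t x.1.1 x.2.1 r.succ,
      Fin.val_castSucc, Fin.val_succ, add_assoc]

lemma image_pairVertices_subset (h : x.1.1 (Fin.last t) = x.2.1 0) :
    univ.image (pairVertices x) ⊆
      (range (2 * (t + t) + 1)).image (walkVertex (concatUsers x) (concatChips x)) := by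
  have huser : ∀ r ≤ t + t, Sum.inl (concatUsers x r) ∈
      (range (2 * (t + t) + 1)).image (walkVertex (concatUsers x) (concatChips x)) := fun r hr ↦
    mem_image.2 ⟨2 * r, mem_range.2 (by omega), interleave_two_mul _ _ r⟩
  have hchip : ∀ r < t + t, Sum.inr (concatChips x r) ∈
      (range (2 * (t + t) + 1)).image (walkVertex (concatUsers x) (concatChips x)) := fun r hr ↦
    mem_image.2 ⟨2 * r + 1, mem_range.2 (by omega), interleave_two_mul_add_one _ _ r⟩
  rw [image_subset_iff]
  rintro ((r | r) | (r | r)) -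
  · simpa [concatUsers, pairVertices, splice_of_last_eq h] using huser r (by omega)
  · simpa [concatChips, pairVertices, splice_of_lt] using hchip r (by omega)
  · simpa [concatUsers, pairVertices, splice_add] using huser (t + r) (by omega)
  · simpa [concatChips, pairVertices, splice_add] using hchip (t + r) (by omega)

lemma card_image_pairVertices_erase_le {i : Fin K} (hp : x.1 ∈ walkSet K N t i)
    (hq : x.2 ∈ walkSet K N t i) (h : RepeatsOn (concatEdge x) (range (2 * (t + t)))) :
    #((univ.image (pairVertices x)).erase (Sum.inl i)) ≤ 2 * t - 1 := by
  obtain ⟨-, hstart, hend, huser, hchip⟩ := mem_filter.1 hp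
  obtain ⟨-, hstart', -⟩ := mem_filter.1 hq
  have hjoin : x.1.1 (Fin.last t) = x.2.1 0 := hend.trans hstart'.symm
  have hu : ∀ r : Fin (t + 1), concatUsers x r = x.1.1 r := splice_of_last_eq hjoin
  have hc : ∀ r : Fin t, concatChips x r = x.1.2 r := fun r ↦ splice_of_lt _ _ r.2
  have hcard : #((range (2 * (t + t) + 1)).image (walkVertex (concatUsers x) (concatChips x))) ≤
      t + t := by
    refine card_image_walkVertex_le (t := t) (NeZero.ne t) (by omega) ?_ (fun r hr ↦ ?_)
      (fun r hr ↦ ?_) h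
    · exact (hu (Fin.last t)).trans <| hend.trans <| hstart.symm.trans (hu 0).symm
    · have := huser ⟨r, hr⟩
      rwa [← hu, ← hu] at this
    · have := hchip ⟨r, by omega⟩ ⟨r + 1, hr⟩ rfl
      rwa [← hc, ← hc] at this
  have hmem : Sum.inl i ∈ univ.image (pairVertices x) :=
    mem_image.2 ⟨.inl (.inl 0), mem_univ _, by simp [pairVertices, hstart]⟩
  have hsubset := card_le_card (image_pairVertices_subset hjoin)
  rw [card_erase_of_mem hmem]
  omega

open Classical in
lemma card_filter_repeatsOn_concatEdge_le (i : Fin K) :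
    #{x ∈ walkSet K N t i ×ˢ walkSet K N t i |
        RepeatsOn (concatEdge x) (range (2 * (t + t)))} ≤
      (2 * t) ^ (4 * t + 2) * (K + N) ^ (2 * t - 1) := by
  have ht : 2 * t - 1 + 1 = 2 * t := by have := NeZero.ne t; omega
  calc _ ≤ #{w : (Fin (t + 1) ⊕ Fin t) ⊕ (Fin (t + 1) ⊕ Fin t) → Fin K ⊕ Fin N |
          #((univ.image w).erase (Sum.inl i)) ≤ 2 * t - 1} := by
        refine card_le_card_of_injOn pairVertices (fun x hx ↦ ?_) pairVertices_injective.injOn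
        obtain ⟨hx, hrepeats⟩ := mem_filter.1 hx
        obtain ⟨hp, hq⟩ := mem_product.1 hx
        simpa using card_image_pairVertices_erase_le hp hq hrepeats
    _ ≤ _ := card_filter_card_image_erase_le _ _
    _ = _ := by
        simp only [Fintype.card_sum, Fintype.card_fin, ht]
        congr 2
        ring

end WalkPair

section SignMatrix

variable {K N : ℕ} {ι : Type*} {e : ι → Fin K × Fin N} {J : Finset ι}

/-- Negate the entry of a Boolean matrix at the position `x`. -/
def flipEntry (x : Fin K × Fin N) (s : Fin K → Fin N → Bool) : Fin K → Fin N → Bool :=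
  fun i a ↦ if (i, a) = x then !(s i a) else s i a

lemma flipEntry_flipEntry (x : Fin K × Fin N) (s : Fin K → Fin N → Bool) :
    flipEntry x (flipEntry x s) = s := by
  funext i a
  by_cases h : (i, a) = x <;> simp [flipEntry, h]

lemma toSign_flipEntry_self (x : Fin K × Fin N) (s : Fin K → Fin N → Bool) :
    toSign (flipEntry x s) x.1 x.2 = -toSign s x.1 x.2 := by
  cases h : s x.1 x.2 <;> simp [toSign, flipEntry, h]

lemma toSign_flipEntry_of_ne {x y : Fin K × Fin N} (h : y ≠ x) (s : Fin K → Fin N → Bool) :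
    toSign (flipEntry x s) y.1 y.2 = toSign s y.1 y.2 := by
  simp [toSign, flipEntry, h]

lemma abs_toSign (s : Fin K → Fin N → Bool) (i : Fin K) (a : Fin N) : |toSign s i a| = 1 := by
  cases h : s i a <;> simp [toSign, h]

lemma sum_prod_toSign_eq_zero {j₀ : ι} (hj₀ : j₀ ∈ J) (h : ∀ j ∈ J, j ≠ j₀ → e j ≠ e j₀) :
    ∑ s : Fin K → Fin N → Bool, ∏ j ∈ J, toSign s (e j).1 (e j).2 = 0 := by
  classical
  have hflip : ∀ s, ∏ j ∈ J, toSign (flipEntry (e j₀) s) (e j).1 (e j).2 =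
      -∏ j ∈ J, toSign s (e j).1 (e j).2 := fun s ↦ by
    rw [← mul_prod_erase _ _ hj₀, ← mul_prod_erase _ _ hj₀, ← neg_mul, toSign_flipEntry_self]
    congr 1
    refine prod_congr rfl fun j hj ↦ toSign_flipEntry_of_ne ?_ s
    exact h j (mem_of_mem_erase hj) (ne_of_mem_erase hj)
  have hinvol : Function.Involutive (flipEntry (e j₀)) := flipEntry_flipEntry _
  have hsum := Equiv.sum_comp (hinvol.toPerm _) fun s ↦ ∏ j ∈ J, toSign s (e j).1 (e j).2
  simp only [Function.Involutive.coe_toPerm, hflip, sum_neg_distrib] at hsum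
  linarith

lemma sum_prod_toSign_le (e : ι → Fin K × Fin N) (J : Finset ι) :
    ∑ s : Fin K → Fin N → Bool, ∏ j ∈ J, toSign s (e j).1 (e j).2 ≤ 2 ^ (K * N) :=
  calc _ ≤ ∑ _s : Fin K → Fin N → Bool, (1 : ℝ) := by
        refine sum_le_sum fun s _ ↦ (le_abs_self _).trans_eq ?_
        simp [abs_prod, abs_toSign]
    _ = 2 ^ (K * N) := by simp [← pow_mul, mul_comm]

lemma sum_prod_toSign_le_ite (e : ι → Fin K × Fin N) (J : Finset ι) [Decidable (RepeatsOn e J)] :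
    ∑ s : Fin K → Fin N → Bool, ∏ j ∈ J, toSign s (e j).1 (e j).2 ≤
      if RepeatsOn e J then 2 ^ (K * N) else 0 := by
  split_ifs with h
  · exact sum_prod_toSign_le e J
  · unfold RepeatsOn at h
    push Not at h
    obtain ⟨j₀, hj₀, h⟩ := h
    exact (sum_prod_toSign_eq_zero hj₀ h).le

lemma sum_sq_sum_walkWeight_le {t : ℕ} [NeZero t] (i : Fin K) :
    ∑ s : Fin K → Fin N → Bool, (∑ p ∈ walkSet K N t i, walkWeight (toSign s) p) ^ 2 ≤
      (2 * t) ^ (4 * t + 2) * (K + N) ^ (2 * t - 1) * 2 ^ (K * N) := by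
  classical
  set W := walkSet K N t i
  have hjoin : ∀ x ∈ W ×ˢ W, x.1.1 (Fin.last t) = x.2.1 0 := fun x hx ↦ by
    obtain ⟨hp, hq⟩ := mem_product.1 hx
    exact (mem_filter.1 hp).2.2.1.trans (mem_filter.1 hq).2.1.symm
  calc ∑ s : Fin K → Fin N → Bool, (∑ p ∈ W, walkWeight (toSign s) p) ^ 2
      = ∑ x ∈ W ×ˢ W, ∑ s : Fin K → Fin N → Bool,
          walkWeight (toSign s) x.1 * walkWeight (toSign s) x.2 := by
        rw [sum_comm]
        simp only [sq, sum_mul_sum, sum_product]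
    _ ≤ ∑ x ∈ W ×ˢ W,
          if RepeatsOn (concatEdge x) (range (2 * (t + t))) then (2 : ℝ) ^ (K * N) else 0 := by
        refine sum_le_sum fun x hx ↦ ?_
        simp only [walkWeight_mul_walkWeight _ (hjoin x hx)]
        exact sum_prod_toSign_le_ite _ _
    _ = #{x ∈ W ×ˢ W | RepeatsOn (concatEdge x) (range (2 * (t + t)))} * (2 : ℝ) ^ (K * N) := by
        rw [← sum_filter, sum_const, nsmul_eq_mul]
    _ ≤ (2 * t) ^ (4 * t + 2) * (K + N) ^ (2 * t - 1) * 2 ^ (K * N) := by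
        gcongr
        exact_mod_cast card_filter_repeatsOn_concatEdge_le i

end SignMatrix

lemma sq_deltaPath_coeff_le {n l h v : ℝ} (t : ℕ) (hn : 0 < n) (hl : 1 ≤ l) (hv : 0 < v)
    (hvh : v ≤ h) :
    (1 / (1 + 1 / h) * (-(1 / (n * l * h))) ^ t) ^ 2 ≤ 1 / (v * n) ^ (2 * t) := by
  have hh : 0 < h := hv.trans_le hvh
  have hL : 1 / (1 + 1 / h) ≤ 1 :=
    (div_le_one (by positivity)).2 (le_add_of_nonneg_right (by positivity))
  have hden : v * n ≤ n * l * h := by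
    calc v * n ≤ h * n := by gcongr
      _ = n * 1 * h := by ring
      _ ≤ n * l * h := by gcongr
  calc (1 / (1 + 1 / h) * (-(1 / (n * l * h))) ^ t) ^ 2
      = (1 / (1 + 1 / h)) ^ 2 * (1 / (n * l * h)) ^ (2 * t) := by
        rw [mul_pow, ← pow_mul, mul_comm t, (even_two_mul t).neg_pow]
    _ ≤ 1 ^ 2 * (1 / (v * n)) ^ (2 * t) := by gcongr
    _ = 1 / (v * n) ^ (2 * t) := by rw [one_pow, one_mul, one_div_pow]

lemma sq_le_lamHatStar (σ : ℝ) {K : ℕ} (N : ℕ) {l : ℝ} (hK : 1 ≤ K) (hl : 0 ≤ l) :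
    σ ^ 2 ≤ lamHatStar σ K N l := by
  have : (0 : ℝ) ≤ K - 1 := sub_nonneg.2 (by exact_mod_cast hK)
  exact le_add_of_nonneg_right (by positivity)

lemma natCeil_mul_le {a x : ℝ} (ha : 0 ≤ a) (hx : 1 ≤ x) : (⌈a * x⌉₊ : ℝ) ≤ (a + 1) * x := by
  have := Nat.ceil_lt_add_one (show 0 ≤ a * x by positivity)
  linarith

lemma sum_sq_deltaPath_le {K N t : ℕ} [NeZero t] {l h v : ℝ} (hN : 0 < N) (hl : 1 ≤ l)
    (hv : 0 < v) (hvh : v ≤ h) (i : Fin K) :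
    ∑ s : Fin K → Fin N → Bool, deltaPath K N t l h (1 + 1 / h) (toSign s) i ^ 2 ≤
      1 / (v * N) ^ (2 * t) *
        ((2 * t) ^ (4 * t + 2) * (K + N) ^ (2 * t - 1) * 2 ^ (K * N)) := by
  have hcoeff := sq_deltaPath_coeff_le t (Nat.cast_pos.2 hN) hl hv hvh
  calc ∑ s : Fin K → Fin N → Bool, deltaPath K N t l h (1 + 1 / h) (toSign s) i ^ 2
      = (1 / (1 + 1 / h) * (-(1 / (N * l * h))) ^ t) ^ 2 *
          ∑ s : Fin K → Fin N → Bool, (∑ p ∈ walkSet K N t i, walkWeight (toSign s) p) ^ 2 := by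
        rw [mul_sum]
        exact sum_congr rfl fun s _ ↦ mul_pow _ _ 2
    _ ≤ _ := by
        gcongr
        exact sum_sq_sum_walkWeight_le i

theorem second_moment_fixed_length_paths_general (σ β : ℝ) (t : ℕ) (hσ : σ ≠ 0) (ht : 1 ≤ t) :
    ∃ C : ℝ, ∀ K N : ℕ, (K : ℝ) ≤ β * N → ∀ l : ℝ, 1 ≤ l → ∀ i : Fin K,
      (∑ s : Fin K → Fin N → Bool,
          deltaPath K N t l (lamHatStar σ K N l) (1 + 1 / lamHatStar σ K N l) (toSign s) i ^ 2) /
        2 ^ (K * N) ≤ C / N := by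
  have : NeZero t := ⟨by omega⟩
  refine ⟨(2 * t) ^ (4 * t + 2) * (β + 1) ^ (2 * t - 1) / (σ ^ 2) ^ (2 * t),
    fun K N hKN l hl i ↦ ?_⟩
  have hK : 1 ≤ K := by have := i.2; omega
  have hN : 0 < N := by
    rcases N.eq_zero_or_pos with rfl | hN
    · norm_num at hKN
      omega
    · exact hN
  have hpow : (N : ℝ) ^ (2 * t) = N ^ (2 * t - 1) * N := (pow_sub_one_mul (by omega) _).symm
  rw [div_le_iff₀ (by positivity)]
  calc _ ≤ 1 / (σ ^ 2 * N) ^ (2 * t) *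
          ((2 * t) ^ (4 * t + 2) * (K + N) ^ (2 * t - 1) * 2 ^ (K * N)) :=
        sum_sq_deltaPath_le hN hl (by positivity)
          (sq_le_lamHatStar σ N hK (zero_le_one.trans hl)) i
    _ ≤ 1 / (σ ^ 2 * N) ^ (2 * t) *
          ((2 * t) ^ (4 * t + 2) * ((β + 1) * N) ^ (2 * t - 1) * 2 ^ (K * N)) := by
        gcongr
        linarith
    _ = _ := by
        rw [mul_pow, mul_pow (β + 1), hpow]
        field_simp

/-- For fixed t and K = ⌈αN⌉, the second moment of the length-2t
path-sum term δ_i^{(t)} over the i.i.d. uniform ±1 signatures is at most C/N. -/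
theorem second_moment_fixed_length_paths (σ α : ℝ) (t : ℕ)
    (hσ : 0 < σ) (hα : 0 < α) (ht : 1 ≤ t)
    (lamStar : ℕ → ℝ)
    (hfix : ∀ N : ℕ, 2 ≤ N →
      1 < lamStar N ∧
      bpVarMap σ ⌈α * (N : ℝ)⌉₊ N (lamStar N) = lamStar N ∧
      (∀ l : ℝ, 0 < l → bpVarMap σ ⌈α * (N : ℝ)⌉₊ N l = l → l = lamStar N)) :
    ∃ C : ℝ, ∀ N : ℕ, 2 ≤ N → ∀ i : Fin ⌈α * (N : ℝ)⌉₊,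
      (∑ s : Fin ⌈α * (N : ℝ)⌉₊ → Fin N → Bool,
          (deltaPath ⌈α * (N : ℝ)⌉₊ N t (lamStar N)
            (lamHatStar σ ⌈α * (N : ℝ)⌉₊ N (lamStar N))
            (1 + 1 / lamHatStar σ ⌈α * (N : ℝ)⌉₊ N (lamStar N))
            (toSign s) i) ^ 2) / 2 ^ (⌈α * (N : ℝ)⌉₊ * N) ≤ C / N := by
  obtain ⟨C, hC⟩ := second_moment_fixed_length_paths_general σ (α + 1) t hσ.ne' ht
  exact ⟨C, fun N hN ↦ hC _ N (natCeil_mul_le hα.le (by exact_mod_cast one_le_two.trans hN)) _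
    (hfix N hN).1.le⟩
end

section
/- Let K, N be positive integers, σ > 0, α = K/N, and let Λ > 0 be the unique positive solution of 1/Λ = σ² + α/(1+Λ). Let S̃ be any real N×K matrix and y ∈ ℝ^N. Suppose G ∈ ℝ^K and Ĝ ∈ ℝ^N satisfy the fixed-point equations G = (Λ/(1+Λ))·G + Λ·S̃ᵀ·Ĝ and Ĝ = (α·Λ/(1+Λ))·Ĝ + y − (1/(1+Λ))·S̃·G. Then G/(1+Λ) = (σ²·I_K + S̃ᵀS̃)⁻¹·S̃ᵀ·y, i.e., the fixed point of the approximate BP iteration yields exactly the MMSE estimate. -/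
/-!
A fixed point of `g ↦ c • g + w` satisfies `(1 - c) • g = w`. For the two updates the factors
`1 - c` are `1 / (1 + Λ)` and, by the Tse–Hanly equation, `v * Λ`, where `v = σ²` is the noise
variance. Hence `x = (1 / (1 + Λ)) • G` satisfies `x = Λ • Sᴴ *ᵥ Gh` and
`(v * Λ) • Gh = y - S *ᵥ x`: up to the factor `v * Λ`, the vector `Gh` is the residual of `x`.
Eliminating `Gh` leaves the normal equations `(v • 1 + Sᴴ * S) *ᵥ x = Sᴴ *ᵥ y`, whose matrix is
positive definite.
-/

open Matrix

theorem eq_smul_add_iff {R M : Type*} [Ring R] [AddCommGroup M] [Module R M] {c : R} {g w : M} :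
    g = c • g + w ↔ (1 - c) • g = w := by
  rw [sub_smul, one_smul, sub_eq_iff_eq_add']

theorem one_sub_mul_div_one_add_of_tseHanly {F : Type*} [Field F] {v α Λ : F} (hΛ : Λ ≠ 0)
    (hTH : 1 / Λ = v + α / (1 + Λ)) : 1 - α * Λ / (1 + Λ) = v * Λ :=
  calc
    1 - α * Λ / (1 + Λ) = (1 / Λ - α / (1 + Λ)) * Λ := by
      rw [sub_mul, one_div_mul_cancel hΛ, div_mul_eq_mul_div]
    _ = v * Λ := by rw [hTH, add_sub_cancel_right]

section NormalEquations

variable {m n A : Type*} [Fintype m] [Fintype n] [DecidableEq n] [Ring A]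

theorem smul_one_add_mul_mulVec_eq_of_residual {R : Type*} [CommSemiring R] [Algebra R A]
    {S : Matrix m n A} {T : Matrix n m A} {v c : R} {x : n → A} {r y : m → A}
    (hx : x = c • T *ᵥ r) (hr : (v * c) • r = y - S *ᵥ x) :
    (v • (1 : Matrix n n A) + T * S) *ᵥ x = T *ᵥ y := by
  have hvx : v • x = T *ᵥ (y - S *ᵥ x) := by
    rw [← hr, mulVec_smul, mul_smul, ← hx]
  rw [add_mulVec, smul_mulVec, one_mulVec, ← mulVec_mulVec, hvx, mulVec_sub, sub_add_cancel]

theorem smul_one_add_mul_mulVec_eq_of_approx_bp_fixed_point {F : Type*} [Field F] [Algebra F A]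
    {S : Matrix m n A} {T : Matrix n m A} {v α Λ : F} {G : n → A} {Gh y : m → A}
    (hΛ : Λ ≠ 0) (hΛ' : 1 + Λ ≠ 0) (hTH : 1 / Λ = v + α / (1 + Λ))
    (hG : G = (Λ / (1 + Λ)) • G + Λ • T *ᵥ Gh)
    (hGh : Gh = (α * Λ / (1 + Λ)) • Gh + y - (1 / (1 + Λ)) • S *ᵥ G) :
    (v • (1 : Matrix n n A) + T * S) *ᵥ ((1 / (1 + Λ)) • G) = T *ᵥ y := by
  have hx : (1 / (1 + Λ)) • G = Λ • T *ᵥ Gh := by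
    rwa [eq_smul_add_iff, one_sub_div hΛ', add_sub_cancel_right] at hG
  have hr : (v * Λ) • Gh = y - S *ᵥ ((1 / (1 + Λ)) • G) := by
    rwa [add_sub_assoc, eq_smul_add_iff, one_sub_mul_div_one_add_of_tseHanly hΛ hTH,
      ← mulVec_smul] at hGh
  exact smul_one_add_mul_mulVec_eq_of_residual hx hr

end NormalEquations

section StarOrderedField

variable {m n F : Type*} [Fintype m] [Fintype n] [DecidableEq n]
  [Field F] [PartialOrder F] [StarRing F] [StarOrderedRing F]

theorem isUnit_smul_one_add_conjTranspose_mul_self (S : Matrix m n F) {v : F} (hv : 0 < v) :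
    IsUnit (v • (1 : Matrix n n F) + Sᴴ * S) :=
  ((PosDef.one.smul hv).add_posSemidef (posSemidef_conjTranspose_mul_self S)).isUnit

theorem approx_bp_fixed_point_is_mmse_general {v α Λ : F} (hv : 0 < v) (hΛ : Λ ≠ 0)
    (hΛ' : 1 + Λ ≠ 0) (hTH : 1 / Λ = v + α / (1 + Λ))
    {S : Matrix m n F} {y : m → F} {G : n → F} {Gh : m → F}
    (hG : G = (Λ / (1 + Λ)) • G + Λ • Sᴴ *ᵥ Gh)
    (hGh : Gh = (α * Λ / (1 + Λ)) • Gh + y - (1 / (1 + Λ)) • S *ᵥ G) :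
    (1 / (1 + Λ)) • G = (v • (1 : Matrix n n F) + Sᴴ * S)⁻¹ *ᵥ (Sᴴ *ᵥ y) := by
  have := (isUnit_smul_one_add_conjTranspose_mul_self S hv).invertible
  exact (inv_mulVec_eq_vec
    (smul_one_add_mul_mulVec_eq_of_approx_bp_fixed_point hΛ hΛ' hTH hG hGh).symm).symm

end StarOrderedField

/-- If Λ > 0 solves the Tse–Hanly equation with α = K/N and
(G, Ĝ) is a fixed point of the approximate BP iteration, then G/(1+Λ) is exactly the
MMSE estimate (σ²I + S̃ᵀS̃)⁻¹S̃ᵀy. -/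
theorem approx_bp_fixed_point_is_mmse (K N : ℕ) (hK : 0 < K) (hN : 0 < N)
    (σ Λ : ℝ) (hσ : 0 < σ) (hΛ : 0 < Λ)
    (hTH : 1 / Λ = σ ^ 2 + ((K : ℝ) / (N : ℝ)) / (1 + Λ))
    (S : Matrix (Fin N) (Fin K) ℝ) (y : Fin N → ℝ)
    (G : Fin K → ℝ) (Gh : Fin N → ℝ)
    (hG : G = (Λ / (1 + Λ)) • G + Λ • (Sᵀ.mulVec Gh))
    (hGh : Gh = (((K : ℝ) / (N : ℝ)) * Λ / (1 + Λ)) • Gh + y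
      - (1 / (1 + Λ)) • (S.mulVec G)) :
    (1 / (1 + Λ)) • G =
      ((σ ^ 2 • (1 : Matrix (Fin K) (Fin K) ℝ) + Sᵀ * S)⁻¹).mulVec (Sᵀ.mulVec y) := by
  rw [← conjTranspose_eq_transpose_of_trivial] at hG ⊢
  exact approx_bp_fixed_point_is_mmse_general (by positivity) hΛ.ne' (by positivity) hTH hG hGh
end

section
/- Fix σ > 0, α > 0, and a > 0, and let Λ > 0 be the unique positive solution of 1/Λ = σ² + (K/N)/(1+Λ) with K = ⌈αN⌉; set λ* = 1+Λ and λ̂* = 1/Λ. Define the approximate BP iteration by G^{(0)} = 0 ∈ ℝ^K, Ĝ^{(0)} = y ∈ ℝ^N, and for t ≥ 0: G^{(t+1)}_i = (1/(λ*·λ̂*))·G^{(t)}_i + (1/(λ̂*·√N))·Σ_{b=1}^N s_{ib}·Ĝ^{(t)}_b and Ĝ^{(t+1)}_a = y_a + ((K/N)/(λ*·λ̂*))·Ĝ^{(t)}_a − (1/(λ*·√N))·Σ_{k=1}^K s_{ka}·G^{(t+1)}_k. Then there exists C > 0 such that for every N, with probability at least 1 − C·N^{−a} over the i.i.d. uniform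 ±1 signature entries s_{ia}, for every y ∈ ℝ^N the sequence G^{(t)} converges to a limit G^{(∞)}, and G^{(∞)}/(1+Λ) = (σ²·I_K + S̃ᵀS̃)⁻¹·S̃ᵀ·y, the MMSE estimate. -/
open Matrix

/-- The MMSE estimate x̂(y) = (σ²·I + S̃ᵀS̃)⁻¹ S̃ᵀ y. -/
noncomputable def mmseEstimate {K N : ℕ} (σ : ℝ) (s : Fin K → Fin N → ℝ)
    (y : Fin N → ℝ) : Fin K → ℝ :=
  ((σ ^ 2 • (1 : Matrix (Fin K) (Fin K) ℝ) + (Stilde s)ᵀ * Stilde s)⁻¹).mulVec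
    ((Stilde s)ᵀ.mulVec y)

/-- The approximate BP iteration with variance messages frozen at their fixed-point
values λ*, λ̂*: G^{(0)} = 0, Ĝ^{(0)} = y,
G^{(t+1)}_i = (1/(λ*λ̂*))·G^{(t)}_i + (1/(λ̂*√N))·Σ_b s_{ib}·Ĝ^{(t)}_b, and
Ĝ^{(t+1)}_a = y_a + ((K/N)/(λ*λ̂*))·Ĝ^{(t)}_a − (1/(λ*√N))·Σ_k s_{ka}·G^{(t+1)}_k. -/
noncomputable def approxBP {K N : ℕ} (lamS lamH : ℝ) (s : Fin K → Fin N → ℝ)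
    (y : Fin N → ℝ) : ℕ → (Fin K → ℝ) × (Fin N → ℝ)
  | 0 => (0, y)
  | t + 1 =>
    let prev := approxBP lamS lamH s y t
    let G : Fin K → ℝ := fun i =>
      (1 / (lamS * lamH)) * prev.1 i +
        (1 / (lamH * Real.sqrt N)) * ∑ b : Fin N, s i b * prev.2 b
    let Gh : Fin N → ℝ := fun a =>
      y a + (((K : ℝ) / (N : ℝ)) / (lamS * lamH)) * prev.2 a -
        (1 / (lamS * Real.sqrt N)) * ∑ k : Fin K, s k a * G k
    (G, Gh)

/-!
Eliminating the chip variables turns the iteration into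
`G (t + 2) = A G (t + 1) - q G t + const` with `A` affine in the correlation matrix `S̃ᵀS̃`; its
fixed point is `λ*` times the MMSE estimate. By the Schur–Cohn criterion it converges as soon as
every eigenvalue of `S̃ᵀS̃` lies below `2 (1 + K / N) + σ²`. This exceeds the Marchenko–Pastur edge
`(1 + √(K / N))²` by at least `σ²`, so it suffices to bound the probability of an eigenvalue above
the edge by a fixed margin.

For this, compare the moment `E tr (S̃ᵀS̃)ⁿ` with the `n`-th power of the threshold. For signs,
Gaussian integration by parts holds as an inequality `E[s f] ≤ E[∂f]` when `f` is a polynomial with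
nonnegative coefficients; applied along the vector fields `(Y Yᵀ)ᵏ Y` it yields recursive
inequalities for the mixed moments of traces of powers of `Y Yᵀ`. These are dominated by a
Catalan-type recursion whose growth rate is the Marchenko–Pastur edge. Taking `n` of order `√N`, the
probability decays like `N θ ^ √N` with `θ < 1`, faster than any power of `N`.
-/

open Finset MvPolynomial Filter Topology
open scoped BigOperators

lemma mkDerivation_eq_sum_mul_pderiv {τ R : Type*} [Fintype τ] [CommSemiring R]
    (F : τ → MvPolynomial τ R) (f : MvPolynomial τ R) :
    mkDerivation R F f = ∑ e, F e * pderiv e f := by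
  classical
  induction f using MvPolynomial.induction_on with
  | C a => simp
  | add p q hp hq => simp [hp, hq, mul_add, sum_add_distrib]
  | mul_X p i hp =>
    simp only [Derivation.leibniz, mkDerivation_X, hp, pderiv_X, smul_eq_mul, mul_sum, mul_add,
      sum_add_distrib]
    congr 1
    · simp [Pi.single_apply, mul_comm]
    · exact sum_congr rfl fun e _ => by ring

section SignMean

variable {τ : Type*} [Fintype τ] [DecidableEq τ]

/-- The expectation of a polynomial evaluated at independent uniform signs. The coefficients are
natural numbers so that positivity of all terms is built in. -/
noncomputable def signMean : MvPolynomial τ ℕ →+ ℝ where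
  toFun f := 𝔼 s : τ → Bool, aeval (fun e => if s e then (1 : ℝ) else -1) f
  map_zero' := by simp
  map_add' f g := by simp [expect_add_distrib]

lemma signMean_apply (f : MvPolynomial τ ℕ) :
    signMean f = 𝔼 s : τ → Bool, aeval (fun e => if s e then (1 : ℝ) else -1) f := rfl

lemma signMean_one : signMean (1 : MvPolynomial τ ℕ) = 1 := by
  simp [signMean_apply]

lemma signMean_natCast_mul (c : ℕ) (f : MvPolynomial τ ℕ) :
    signMean ((c : MvPolynomial τ ℕ) * f) = c * signMean f := by
  rw [← nsmul_eq_mul, map_nsmul, nsmul_eq_mul]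

lemma signMean_monomial (d : τ →₀ ℕ) (c : ℕ) :
    signMean (monomial d c) = if ∀ e, Even (d e) then (c : ℝ) else 0 := by
  have expand : signMean (monomial d c) = c * ∏ e, (1 + (-1 : ℝ) ^ d e) / 2 := by
    simp only [signMean_apply, aeval_monomial, eq_natCast, Fintype.expect_eq_sum_div_card,
      Finsupp.prod_fintype _ _ fun _ => pow_zero _, ← mul_sum]
    rw [← Fintype.prod_sum fun e (b : Bool) => (if b then (1 : ℝ) else -1) ^ d e]
    simp [prod_div_distrib, mul_div_assoc]
  rw [expand]
  split_ifs with h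
  · simp [(h _).neg_one_pow]
  · obtain ⟨e, he⟩ := not_forall.1 h
    rw [prod_eq_zero (mem_univ e) (by simp [(Nat.not_even_iff_odd.1 he).neg_one_pow]), mul_zero]

lemma signMean_X_mul_le (e : τ) (f : MvPolynomial τ ℕ) :
    signMean (X e * f) ≤ signMean (pderiv e f) := by
  induction f using MvPolynomial.induction_on' with
  | add p q hp hq => simpa only [mul_add, map_add] using add_le_add hp hq
  | monomial d c =>
    rw [pderiv_monomial, X, monomial_mul, one_mul, signMean_monomial, signMean_monomial]
    split_ifs with h_lhs h_rhs h_rhs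
    · have hd : d e ≠ 0 := fun h0 => by simpa [h0] using h_lhs e
      exact_mod_cast Nat.le_mul_of_pos_right c (Nat.pos_of_ne_zero hd)
    · refine absurd (fun e' => ?_) h_rhs
      have := h_lhs e'
      by_cases h : e = e' <;> simp [h] at this ⊢ <;> grind
    · positivity
    · rfl

/-- Gaussian integration by parts becomes an inequality for signs, because a sign has smaller
moments than a standard Gaussian. -/
lemma signMean_sum_X_mul_mul_le (F : τ → MvPolynomial τ ℕ) (Q : MvPolynomial τ ℕ) :
    signMean ((∑ e, X e * F e) * Q) ≤
      signMean ((∑ e, pderiv e (F e)) * Q) + signMean (mkDerivation ℕ F Q) := by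
  calc signMean ((∑ e, X e * F e) * Q) = ∑ e, signMean (X e * (F e * Q)) := by
        simp only [sum_mul, map_sum, mul_assoc]
    _ ≤ ∑ e, signMean (pderiv e (F e * Q)) := sum_le_sum fun e _ => signMean_X_mul_le e _
    _ = _ := by
        rw [mkDerivation_eq_sum_mul_pderiv, sum_mul, ← map_add, ← sum_add_distrib, map_sum]
        simp only [pderiv_mul]

end SignMean

section MatrixDerivation

variable {R A l m n : Type*} [CommSemiring R] [CommSemiring A] [Algebra R A] (D : Derivation R A A)

lemma map_derivation_mul [Fintype m] (P : Matrix l m A) (Q : Matrix m n A) :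
    (P * Q).map D = P.map D * Q + P * Q.map D := by
  ext i j
  simp only [Matrix.map_apply, mul_apply, Matrix.add_apply, map_sum, Derivation.leibniz,
    smul_eq_mul, sum_add_distrib, mul_comm (Q _ _)]
  rw [add_comm]

lemma map_derivation_pow [Fintype m] [DecidableEq m] (P : Matrix m m A) (k : ℕ) :
    (P ^ k).map D = ∑ j ∈ range k, P ^ j * P.map D * P ^ (k - 1 - j) := by
  induction k with
  | zero => ext i j; by_cases h : i = j <;> simp [one_apply, h]
  | succ k ih =>
    rw [pow_succ, map_derivation_mul, ih, sum_range_succ, sum_mul]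
    congr 1
    · refine sum_congr rfl fun j hj => ?_
      have hj := mem_range.1 hj
      rw [Matrix.mul_assoc, ← pow_succ, show k - 1 - j + 1 = k + 1 - 1 - j by omega]
    · simp

lemma derivation_multiset_prod_map {σ : Type*} [DecidableEq σ] (s : Multiset σ) (f : σ → A) :
    D (s.map f).prod = (s.map fun i => ((s.erase i).map f).prod * D (f i)).sum := by
  induction s using Multiset.induction_on with
  | empty => simp
  | cons i s ih =>
    rw [Multiset.map_cons, Multiset.prod_cons, Derivation.leibniz, ih, Multiset.map_cons,
      Multiset.sum_cons, Multiset.erase_cons_head, smul_eq_mul, smul_eq_mul,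
      ← Multiset.sum_map_mul_left, add_comm]
    congr 2
    refine Multiset.map_congr rfl fun j hj => ?_
    rw [← mul_assoc, ← Multiset.prod_cons, ← Multiset.map_cons]
    by_cases hij : i = j
    · rw [hij, Multiset.cons_erase hj, Multiset.erase_cons_head]
    · rw [Multiset.erase_cons_tail s hij]

end MatrixDerivation

section Contraction

variable {ι κ A : Type*} [Fintype ι] [Fintype κ] [DecidableEq ι] [DecidableEq κ] [CommSemiring A]

lemma sum_mul_single_mul_apply (P : Matrix ι ι A) (Q : Matrix κ κ A) :
    ∑ e : ι × κ, (P * Matrix.single e.1 e.2 (1 : A) * Q) e.1 e.2 = P.trace * Q.trace := by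
  simp [mul_apply, Matrix.single_apply, ite_and, Fintype.sum_prod_type, trace,
    sum_mul_sum]

lemma sum_mul_single_swap_mul_apply (P Q : Matrix ι κ A) :
    ∑ e : ι × κ, (P * Matrix.single e.2 e.1 (1 : A) * Q) e.1 e.2 = (P * Qᵀ).trace := by
  simp [mul_apply, Matrix.single_apply, ite_and, Fintype.sum_prod_type, trace]

end Contraction

section LoopEquations

variable (ι κ : Type*) [Fintype ι] [Fintype κ] [DecidableEq ι]

/-- The Gram matrix `Y Yᵀ` of the matrix `Y` of indeterminates. -/
noncomputable def genericGram : Matrix ι ι (MvPolynomial (ι × κ) ℕ) :=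
  mvPolynomialX ι κ ℕ * (mvPolynomialX ι κ ℕ)ᵀ

/-- The power sum `tr (Y Yᵀ)ᵏ`, as a polynomial in the entries of `Y`. -/
noncomputable def gramTrace (k : ℕ) : MvPolynomial (ι × κ) ℕ :=
  (genericGram ι κ ^ k).trace

/-- The vector field `(Y Yᵀ)ᵏ Y` on the space of matrices `Y`. -/
noncomputable def gramField (k : ℕ) (e : ι × κ) : MvPolynomial (ι × κ) ℕ :=
  (genericGram ι κ ^ k * mvPolynomialX ι κ ℕ) e.1 e.2

lemma gramTrace_zero : gramTrace ι κ 0 = Fintype.card ι := by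
  simp [gramTrace]

lemma transpose_genericGram_pow (k : ℕ) : (genericGram ι κ ^ k)ᵀ = genericGram ι κ ^ k := by
  simp [genericGram, transpose_pow]

lemma map_gramField_mvPolynomialX (k : ℕ) :
    (mvPolynomialX ι κ ℕ).map (mkDerivation ℕ (gramField ι κ k)) =
      genericGram ι κ ^ k * mvPolynomialX ι κ ℕ := by
  ext1 i j
  simp [gramField]

lemma map_gramField_genericGram (k : ℕ) :
    (genericGram ι κ).map (mkDerivation ℕ (gramField ι κ k)) =
      2 • genericGram ι κ ^ (k + 1) := by
  conv_lhs =>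
    rw [genericGram, map_derivation_mul, transpose_map, map_gramField_mvPolynomialX,
      transpose_mul, transpose_genericGram_pow, Matrix.mul_assoc,
      ← Matrix.mul_assoc (mvPolynomialX _ _ _)]
  rw [← genericGram, ← pow_succ, ← pow_succ', two_nsmul]

lemma mkDerivation_gramField_gramTrace (k m : ℕ) :
    mkDerivation ℕ (gramField ι κ k) (gramTrace ι κ m) = (2 * m : ℕ) • gramTrace ι κ (m + k) := by
  have trace_map : mkDerivation ℕ (gramField ι κ k) (gramTrace ι κ m) =
      ((genericGram ι κ ^ m).map (mkDerivation ℕ (gramField ι κ k))).trace := by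
    simp [gramTrace, trace]
  have summand : ∀ j ∈ range m,
      (genericGram ι κ ^ j * (2 • genericGram ι κ ^ (k + 1)) * genericGram ι κ ^ (m - 1 - j)) =
        2 • genericGram ι κ ^ (m + k) := fun j hj => by
    have hj := mem_range.1 hj
    rw [mul_smul_comm, smul_mul_assoc, ← pow_add, ← pow_add]
    congr 2
    omega
  rw [trace_map, map_derivation_pow, map_gramField_genericGram, sum_congr rfl summand, sum_const,
    card_range, smul_smul, trace_smul, mul_comm, gramTrace]

lemma sum_X_mul_gramField (k : ℕ) :
    ∑ e, X e * gramField ι κ k e = gramTrace ι κ (k + 1) := by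
  have factor : genericGram ι κ ^ (k + 1) =
      (genericGram ι κ ^ k * mvPolynomialX ι κ ℕ) * (mvPolynomialX ι κ ℕ)ᵀ := by
    rw [pow_succ, Matrix.mul_assoc, ← genericGram]
  rw [gramTrace, factor]
  simp only [Fintype.sum_prod_type, gramField, trace, diag_apply,
    mul_apply (N := (mvPolynomialX ι κ ℕ)ᵀ), transpose_apply, mvPolynomialX_apply, mul_comm]

lemma map_pderiv_gramField [DecidableEq κ] (k : ℕ) (e : ι × κ) :
    (genericGram ι κ ^ k * mvPolynomialX ι κ ℕ).map (pderiv e) =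
      ∑ j ∈ range k, (genericGram ι κ ^ j * Matrix.single e.1 e.2 (1 : MvPolynomial (ι × κ) ℕ) *
          ((mvPolynomialX ι κ ℕ)ᵀ * genericGram ι κ ^ (k - 1 - j) * mvPolynomialX ι κ ℕ) +
        genericGram ι κ ^ j * mvPolynomialX ι κ ℕ *
          Matrix.single e.2 e.1 (1 : MvPolynomial (ι × κ) ℕ) *
          (genericGram ι κ ^ (k - 1 - j) * mvPolynomialX ι κ ℕ)) +
      genericGram ι κ ^ k * Matrix.single e.1 e.2 (1 : MvPolynomial (ι × κ) ℕ) *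
        (1 : Matrix κ κ (MvPolynomial (ι × κ) ℕ)) := by
  have map_X : (mvPolynomialX ι κ ℕ).map (pderiv e) =
      Matrix.single e.1 e.2 (1 : MvPolynomial (ι × κ) ℕ) := by
    ext1 i j
    simp [pderiv_X, Pi.single_apply, Matrix.single_apply, Prod.ext_iff, eq_comm]
  have map_gram : (genericGram ι κ).map (pderiv e) =
      Matrix.single e.1 e.2 (1 : MvPolynomial (ι × κ) ℕ) * (mvPolynomialX ι κ ℕ)ᵀ +
        mvPolynomialX ι κ ℕ * Matrix.single e.2 e.1 (1 : MvPolynomial (ι × κ) ℕ) := by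
    rw [genericGram, map_derivation_mul, transpose_map, map_X, transpose_single]
  rw [map_derivation_mul, map_derivation_pow, map_X, map_gram, Matrix.sum_mul,
    Matrix.mul_one]
  simp only [Matrix.mul_add, Matrix.add_mul, Matrix.mul_assoc]

lemma sum_pderiv_gramField (k : ℕ) :
    ∑ e, pderiv e (gramField ι κ k e) =
      Fintype.card κ * gramTrace ι κ k + k * gramTrace ι κ k +
        ∑ j ∈ range k, gramTrace ι κ j * gramTrace ι κ (k - j) := by
  classical
  have trace_left (j) (hj : j ∈ range k) : ((mvPolynomialX ι κ ℕ)ᵀ *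
      genericGram ι κ ^ (k - 1 - j) * mvPolynomialX ι κ ℕ).trace = gramTrace ι κ (k - j) := by
    have hj := mem_range.1 hj
    rw [trace_mul_comm, ← Matrix.mul_assoc, ← genericGram, ← pow_succ', gramTrace]
    congr 2
    omega
  have trace_right (j) (hj : j ∈ range k) : (genericGram ι κ ^ j * mvPolynomialX ι κ ℕ *
      (genericGram ι κ ^ (k - 1 - j) * mvPolynomialX ι κ ℕ)ᵀ).trace = gramTrace ι κ k := by
    have hj := mem_range.1 hj
    rw [transpose_mul, transpose_genericGram_pow, Matrix.mul_assoc,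
      ← Matrix.mul_assoc (mvPolynomialX _ _ _), ← genericGram, ← pow_succ', ← pow_add, gramTrace]
    congr 2
    omega
  have entry (e : ι × κ) : pderiv e (gramField ι κ k e) =
      (genericGram ι κ ^ k * mvPolynomialX ι κ ℕ).map (pderiv e) e.1 e.2 := rfl
  simp only [entry, map_pderiv_gramField, Matrix.add_apply, Matrix.sum_apply, sum_add_distrib]
  rw [sum_comm, sum_comm (s := univ) (t := range k)]
  simp only [sum_mul_single_mul_apply, sum_mul_single_swap_mul_apply]
  rw [sum_congr rfl trace_right, sum_congr rfl fun j hj => by rw [trace_left j hj]]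
  simp only [gramTrace, trace_one, sum_const, card_range, nsmul_eq_mul]
  ring

variable [DecidableEq κ]

/-- The mixed moment `E ∏ tr (Y Yᵀ)ᵐ` over `m ∈ L` of a matrix `Y` of independent uniform signs. -/
noncomputable def traceMoment (L : Multiset ℕ) : ℝ :=
  signMean (L.map (gramTrace ι κ)).prod

lemma traceMoment_zero : traceMoment ι κ 0 = 1 := by
  simp [traceMoment, signMean_one]

lemma traceMoment_zero_cons (L : Multiset ℕ) :
    traceMoment ι κ (0 ::ₘ L) = Fintype.card ι * traceMoment ι κ L := by
  simp [traceMoment, gramTrace_zero, signMean_natCast_mul]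

lemma traceMoment_succ_cons_le (k : ℕ) (L : Multiset ℕ) :
    traceMoment ι κ ((k + 1) ::ₘ L) ≤
      (Fintype.card κ + k) * traceMoment ι κ (k ::ₘ L) +
        ∑ j ∈ range k, traceMoment ι κ (j ::ₘ (k - j) ::ₘ L) +
        (L.map fun m => 2 * m * traceMoment ι κ ((m + k) ::ₘ L.erase m)).sum := by
  set Q := (L.map (gramTrace ι κ)).prod with hQ
  have divergence : signMean ((∑ e, pderiv e (gramField ι κ k e)) * Q) =
      (Fintype.card κ + k) * traceMoment ι κ (k ::ₘ L) +
        ∑ j ∈ range k, traceMoment ι κ (j ::ₘ (k - j) ::ₘ L) := by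
    simp only [sum_pderiv_gramField, add_mul, sum_mul, map_add, map_sum, traceMoment,
      Multiset.map_cons, Multiset.prod_cons, ← hQ, mul_assoc, signMean_natCast_mul]
  have derivative : signMean (mkDerivation ℕ (gramField ι κ k) Q) =
      (L.map fun m => 2 * m * traceMoment ι κ ((m + k) ::ₘ L.erase m)).sum := by
    rw [hQ, derivation_multiset_prod_map, ← Multiset.sum_hom, Multiset.map_map]
    congr 1
    refine Multiset.map_congr rfl fun m _ => ?_
    rw [Function.comp_apply, mkDerivation_gramField_gramTrace, nsmul_eq_mul, mul_left_comm,
      signMean_natCast_mul, mul_comm _ (gramTrace _ _ _), traceMoment,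
      Multiset.map_cons, Multiset.prod_cons, Nat.cast_mul, Nat.cast_ofNat]
  calc traceMoment ι κ ((k + 1) ::ₘ L)
      = signMean ((∑ e, X e * gramField ι κ k e) * Q) := by
        rw [traceMoment, Multiset.map_cons, Multiset.prod_cons, sum_X_mul_gramField]
    _ ≤ _ := signMean_sum_X_mul_mul_le _ Q
    _ = _ := by rw [divergence, derivative]

end LoopEquations

section LoopMajorant

/-- A sequence dominating the solution of the loop inequalities `traceMoment_succ_cons_le` for
`K × N` matrices up to total degree `n`: products of its terms bound the mixed moments. The constant
`D` measures the failure of log-convexity and controls the term coming from the derivatives of the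
other traces. -/
structure IsLoopMajorant (K N n : ℕ) (D : ℝ) (b : ℕ → ℝ) : Prop where
  nonneg : ∀ k, 0 ≤ b k
  zero_eq : b 0 = K
  add_le : ∀ m k, m + k ≤ n → b (m + k) ≤ D * (b m * b k)
  le_succ : ∀ k < n, (N + n + 2 * n * D) * b k + ∑ j ∈ range k, b j * b (k - j) ≤ b (k + 1)

variable (ι κ : Type*) [Fintype ι] [Fintype κ] [DecidableEq ι] [DecidableEq κ]
variable {n : ℕ} {D : ℝ} {b : ℕ → ℝ}

lemma IsLoopMajorant.sum_erase_le {K N : ℕ} (hb : IsLoopMajorant K N n D b) (hD : 0 ≤ D) {k : ℕ}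
    {L : Multiset ℕ} (hL : k + L.sum ≤ n) :
    (L.map fun m => 2 * m * (b (m + k) * ((L.erase m).map b).prod)).sum ≤
      2 * n * D * (b k * (L.map b).prod) := by
  have hP : 0 ≤ (L.map b).prod := Multiset.prod_nonneg (by simp [hb.nonneg])
  have term (m) (hm : m ∈ L) : 2 * m * (b (m + k) * ((L.erase m).map b).prod) ≤
      m * (2 * D * (b k * (L.map b).prod)) := by
    have hmk : m + k ≤ n := by linarith [Multiset.le_sum_of_mem hm]
    have hE : 0 ≤ ((L.erase m).map b).prod := Multiset.prod_nonneg (by simp [hb.nonneg])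
    calc 2 * m * (b (m + k) * ((L.erase m).map b).prod)
        ≤ 2 * m * (D * (b m * b k) * ((L.erase m).map b).prod) := by
          gcongr; exact hb.add_le m k hmk
      _ = m * (2 * D * (b k * (L.map b).prod)) := by
          rw [← Multiset.prod_map_erase hm]; ring
  calc _ ≤ (L.map fun m : ℕ => m * (2 * D * (b k * (L.map b).prod))).sum :=
        Multiset.sum_map_le_sum_map _ _ term
    _ = L.sum * (2 * D * (b k * (L.map b).prod)) := by
        rw [Multiset.sum_map_mul_right, Nat.cast_multiset_sum]
    _ ≤ n * (2 * D * (b k * (L.map b).prod)) := by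
        have := hb.nonneg k
        gcongr
        exact_mod_cast (Nat.le_add_left _ _).trans hL
    _ = _ := by ring

lemma IsLoopMajorant.traceMoment_succ_cons_le
    (hb : IsLoopMajorant (Fintype.card ι) (Fintype.card κ) n D b) (hD : 0 ≤ D) {k : ℕ}
    {L : Multiset ℕ} (hL : k + 1 + L.sum ≤ n)
    (ih : ∀ L' : Multiset ℕ, L'.sum = k + L.sum → traceMoment ι κ L' ≤ (L'.map b).prod) :
    traceMoment ι κ ((k + 1) ::ₘ L) ≤ b (k + 1) * (L.map b).prod := by
  have hP : 0 ≤ (L.map b).prod := Multiset.prod_nonneg (by simp [hb.nonneg])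
  have hk : (k : ℝ) ≤ n := by exact_mod_cast (by omega : k ≤ n)
  have hbk := hb.nonneg k
  have moment_same : traceMoment ι κ (k ::ₘ L) ≤ b k * (L.map b).prod := by
    simpa using ih (k ::ₘ L) (by simp)
  have moment_split (j) (hj : j ∈ range k) :
      traceMoment ι κ (j ::ₘ (k - j) ::ₘ L) ≤ b j * b (k - j) * (L.map b).prod := by
    have hj := mem_range.1 hj
    simpa [mul_assoc] using ih (j ::ₘ (k - j) ::ₘ L)
      (by rw [Multiset.sum_cons, Multiset.sum_cons]; omega)
  have moment_merge : (L.map fun m => 2 * m * traceMoment ι κ ((m + k) ::ₘ L.erase m)).sum ≤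
      (L.map fun m => 2 * m * (b (m + k) * ((L.erase m).map b).prod)).sum :=
    Multiset.sum_map_le_sum_map _ _ fun m hm => by
      gcongr
      simpa using ih ((m + k) ::ₘ L.erase m)
        (by rw [Multiset.sum_cons]; have := Multiset.sum_erase hm; omega)
  calc traceMoment ι κ ((k + 1) ::ₘ L)
      ≤ (Fintype.card κ + k) * traceMoment ι κ (k ::ₘ L) +
          ∑ j ∈ range k, traceMoment ι κ (j ::ₘ (k - j) ::ₘ L) +
          (L.map fun m => 2 * m * traceMoment ι κ ((m + k) ::ₘ L.erase m)).sum :=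
        _root_.traceMoment_succ_cons_le ι κ k L
    _ ≤ (Fintype.card κ + n) * (b k * (L.map b).prod) +
          ∑ j ∈ range k, b j * b (k - j) * (L.map b).prod +
          2 * n * D * (b k * (L.map b).prod) := by
        gcongr ?_ + ?_ + ?_
        · exact mul_le_mul_of_nonneg (by gcongr) moment_same (by positivity) (by positivity)
        · exact sum_le_sum moment_split
        · exact moment_merge.trans (hb.sum_erase_le hD (by omega))
    _ = ((Fintype.card κ + n + 2 * n * D) * b k + ∑ j ∈ range k, b j * b (k - j)) *
          (L.map b).prod := by rw [← sum_mul]; ring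
    _ ≤ b (k + 1) * (L.map b).prod := by
        gcongr
        exact hb.le_succ k (by omega)

theorem IsLoopMajorant.traceMoment_le
    (hb : IsLoopMajorant (Fintype.card ι) (Fintype.card κ) n D b) (hD : 0 ≤ D)
    {L : Multiset ℕ} (hL : L.sum ≤ n) : traceMoment ι κ L ≤ (L.map b).prod := by
  induction hS : L.sum using Nat.strong_induction_on generalizing L with | _ S ih => ?_
  induction L using Multiset.induction_on generalizing S with
  | empty => simp [traceMoment_zero]
  | cons m L ihL => ?_
  rw [Multiset.sum_cons] at hL hS
  rw [Multiset.map_cons, Multiset.prod_cons]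
  cases m with
  | zero =>
    rw [traceMoment_zero_cons, hb.zero_eq]
    gcongr
    exact ihL S ih (by omega) (by omega)
  | succ k =>
    exact hb.traceMoment_succ_cons_le ι κ hD hL fun L' hL' => ih L'.sum (by omega) (by omega) rfl

end LoopMajorant

section CatalanMajorant

/-- The solution of the Catalan-type convolution recursion
`w (k + 1) = e + p * w k + r * ∑ j < k, w j * w (k - j)` with `w 0 = 1`. -/
noncomputable def catalanMajorant (e p r : ℝ) : ℕ → ℝ
  | 0 => 1
  | k + 1 => e + p * catalanMajorant e p r k +
      r * ∑ j : Fin k, catalanMajorant e p r j * catalanMajorant e p r (k - j)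

variable {e p r P : ℝ} {n : ℕ}

local notation "w" => catalanMajorant e p r

lemma catalanMajorant_zero : w 0 = 1 := by
  rw [catalanMajorant]

lemma catalanMajorant_succ (k : ℕ) :
    w (k + 1) = e + p * w k + r * ∑ j ∈ range k, w j * w (k - j) := by
  rw [catalanMajorant, Fin.sum_univ_eq_sum_range fun j => w j * w (k - j)]

lemma catalanMajorant_nonneg (he : 0 ≤ e) (hp : 0 ≤ p) (hr : 0 ≤ r) (k : ℕ) : 0 ≤ w k := by
  induction k using Nat.strong_induction_on with | _ k ih => ?_
  cases k with
  | zero => simp [catalanMajorant_zero]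
  | succ k =>
    have hk := ih k k.lt_succ_self
    have : 0 ≤ ∑ j ∈ range k, w j * w (k - j) := sum_nonneg fun j hj =>
      mul_nonneg (ih j ((mem_range.1 hj).trans k.lt_succ_self)) (ih _ (by omega))
    rw [catalanMajorant_succ]
    positivity

lemma le_catalanMajorant (he : 0 ≤ e) (he₁ : e ≤ 1) (hp : 0 ≤ p) (hr : 0 ≤ r) (k : ℕ) :
    e ≤ w k := by
  have hw := catalanMajorant_nonneg he hp hr
  cases k with
  | zero => rwa [catalanMajorant_zero]
  | succ k =>
    have : 0 ≤ ∑ j ∈ range k, w j * w (k - j) := sum_nonneg fun j _ => mul_nonneg (hw _) (hw _)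
    have := hw k
    rw [catalanMajorant_succ, add_assoc]
    exact le_add_of_nonneg_right (by positivity)

lemma sum_convolution_catalanMajorant_le (he : 0 ≤ e) (hp : 0 ≤ p) (hr : 0 ≤ r) (m : ℕ) :
    ∑ k ∈ range (m + 1), ∑ j ∈ range k, w j * w (k - j) ≤
      (1 + ∑ k ∈ range m, w (k + 1)) * ∑ k ∈ range m, w (k + 1) := by
  have hw := catalanMajorant_nonneg he hp hr
  calc ∑ k ∈ range (m + 1), ∑ j ∈ range k, w j * w (k - j)
      = ∑ k ∈ range m, ∑ j ∈ range (k + 1), w j * w (k - j + 1) := by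
        rw [sum_range_succ', range_zero, sum_empty, add_zero]
        refine sum_congr rfl fun k _ => sum_congr rfl fun j hj => ?_
        rw [Nat.succ_sub (mem_range_succ_iff.1 hj)]
    _ = ∑ j ∈ range m, ∑ l ∈ range (m - j), w j * w (l + 1) :=
        sum_range_diag_flip m fun j l => w j * w (l + 1)
    _ ≤ ∑ j ∈ range (m + 1), ∑ l ∈ range m, w j * w (l + 1) := by
        have hww (j l) : 0 ≤ w j * w (l + 1) := mul_nonneg (hw _) (hw _)
        refine (sum_le_sum fun j _ => ?_).trans (sum_le_sum_of_subset_of_nonneg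
          (range_subset_range.2 m.le_succ) fun j _ _ => sum_nonneg fun l _ => hww j l)
        exact sum_le_sum_of_subset_of_nonneg (range_subset_range.2 (m.sub_le j))
          fun l _ _ => hww j l
    _ = _ := by rw [← sum_mul_sum, sum_range_succ', catalanMajorant_zero, add_comm]

lemma sum_catalanMajorant_succ_le (he : 0 ≤ e) (hp : 0 ≤ p) (hr : 0 ≤ r)
    (hP : n * e + p * (1 + P) + r * ((1 + P) * P) ≤ P) (hP₀ : 0 ≤ P) {m : ℕ} (hm : m ≤ n) :
    ∑ k ∈ range m, w (k + 1) ≤ P := by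
  have hw := catalanMajorant_nonneg he hp hr
  induction m with
  | zero => simpa
  | succ m ih =>
    have ih := ih (by omega)
    have hS : 0 ≤ ∑ k ∈ range m, w (k + 1) := sum_nonneg fun k _ => hw _
    have hmn : ((m + 1 : ℕ) : ℝ) ≤ n := by exact_mod_cast hm
    calc ∑ k ∈ range (m + 1), w (k + 1)
        = (m + 1 : ℕ) * e + p * (1 + ∑ k ∈ range m, w (k + 1)) +
            r * ∑ k ∈ range (m + 1), ∑ j ∈ range k, w j * w (k - j) := by
          rw [sum_congr rfl fun k _ => catalanMajorant_succ k, sum_add_distrib, sum_add_distrib,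
            ← mul_sum, ← mul_sum, sum_range_succ' w, catalanMajorant_zero, sum_const, card_range,
            nsmul_eq_mul, add_comm 1]
      _ ≤ n * e + p * (1 + P) + r * ((1 + P) * P) := by
          gcongr
          refine (sum_convolution_catalanMajorant_le he hp hr m).trans ?_
          gcongr
      _ ≤ P := hP

lemma catalanMajorant_le (he : 0 ≤ e) (hp : 0 ≤ p) (hr : 0 ≤ r)
    (hP : n * e + p * (1 + P) + r * ((1 + P) * P) ≤ P) (hP₀ : 0 ≤ P) {k : ℕ} (hk : k ≤ n) :
    w k ≤ 1 + P := by
  cases k with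
  | zero => rw [catalanMajorant_zero]; linarith
  | succ k =>
    calc w (k + 1) ≤ ∑ j ∈ range (k + 1), w (j + 1) :=
          single_le_sum (f := fun j => w (j + 1))
            (fun j _ => catalanMajorant_nonneg he hp hr _) (self_mem_range_succ k)
      _ ≤ P := sum_catalanMajorant_succ_le he hp hr hP hP₀ hk
      _ ≤ 1 + P := by linarith

lemma catalanMajorant_add_le (he : 0 ≤ e) (he₁ : e ≤ 1) (hp : 0 ≤ p) (hr : 0 ≤ r)
    (hP : n * e + p * (1 + P) + r * ((1 + P) * P) ≤ P) (hP₀ : 0 ≤ P) {c : ℝ}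
    (hc : 1 + P ≤ c * e ^ 2) (hc₀ : 0 ≤ c) {m k : ℕ} (hmk : m + k ≤ n) :
    w (m + k) ≤ c * (w m * w k) := by
  have hm := le_catalanMajorant he he₁ hp hr m
  have hk := le_catalanMajorant he he₁ hp hr k
  have hw := catalanMajorant_nonneg he hp hr m
  calc w (m + k) ≤ 1 + P := catalanMajorant_le he hp hr hP hP₀ hmk
    _ ≤ c * (e * e) := by rwa [← sq]
    _ ≤ c * (w m * w k) := by gcongr

lemma sum_convolution_mul_pow (c x : ℝ) (u : ℕ → ℝ) (k : ℕ) :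
    ∑ j ∈ range k, c * x ^ j * u j * (c * x ^ (k - j) * u (k - j)) =
      c * x ^ k * (c * ∑ j ∈ range k, u j * u (k - j)) := by
  rw [mul_sum, mul_sum]
  refine sum_congr rfl fun j hj => ?_
  rw [← pow_mul_pow_sub x (mem_range.1 hj).le]
  ring

lemma isLoopMajorant_catalanMajorant {K N : ℕ} {D x : ℝ} (hx : 0 ≤ x) (he : 0 ≤ e) (he₁ : e ≤ 1)
    (hp : 0 ≤ p) (hr : 0 ≤ r) (hD : 0 ≤ D) (hP₀ : 0 ≤ P)
    (hP : n * e + p * (1 + P) + r * ((1 + P) * P) ≤ P)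
    (hpx : N + n + 2 * n * D ≤ p * x) (hrx : K ≤ r * x) (hDe : 1 + P ≤ D * K * e ^ 2) :
    IsLoopMajorant K N n D fun k => K * x ^ k * w k where
  nonneg k := by have := catalanMajorant_nonneg he hp hr k; positivity
  zero_eq := by simp [catalanMajorant_zero]
  add_le m k hmk := by
    have key := catalanMajorant_add_le he he₁ hp hr hP hP₀ hDe (by positivity) hmk
    calc K * x ^ (m + k) * w (m + k) ≤ K * x ^ (m + k) * (D * K * (w m * w k)) := by gcongr
      _ = _ := by ring
  le_succ k _ := by
    have hw := catalanMajorant_nonneg he hp hr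
    have hk := hw k
    have conv_nonneg : 0 ≤ ∑ j ∈ range k, w j * w (k - j) :=
      sum_nonneg fun j _ => mul_nonneg (hw _) (hw _)
    calc ((N : ℝ) + n + 2 * n * D) * (K * x ^ k * w k) +
          ∑ j ∈ range k, K * x ^ j * w j * (K * x ^ (k - j) * w (k - j))
        = K * x ^ k *
            ((N + n + 2 * n * D) * w k + K * ∑ j ∈ range k, w j * w (k - j)) := by
          rw [sum_convolution_mul_pow]; ring
      _ ≤ K * x ^ k * (p * x * w k + r * x * ∑ j ∈ range k, w j * w (k - j)) := by gcongr
      _ ≤ K * x ^ k *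
            (e * x + (p * x * w k + r * x * ∑ j ∈ range k, w j * w (k - j))) := by
          gcongr _ * ?_
          exact le_add_of_nonneg_left (mul_nonneg he hx)
      _ = K * x ^ (k + 1) * w (k + 1) := by rw [catalanMajorant_succ]; ring

end CatalanMajorant

section TraceMomentBound

variable (ι κ : Type*) [Fintype ι] [Fintype κ] [DecidableEq ι] [DecidableEq κ]

/-- The scale `P = 1 / q` of the majorant and the threshold `(1 + q)²` come from optimizing
`p * (1 + P) + r * (1 + P) * P ≤ P`. -/
theorem signMean_gramTrace_le {n : ℕ} (hn : n ≠ 0) {ε q R : ℝ} (hε : 0 < ε) (hε₁ : ε ≤ 1)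
    (hq : 0 < q) (hR₀ : 0 < R) (hR : (1 + q) ^ 2 + ε * (q * R + q + 1) ≤ R)
    (hK : (Fintype.card ι : ℝ) = q ^ 2 * Fintype.card κ) (hκ : 0 < Fintype.card κ)
    (hnN : n + 2 * n * ((1 + 1 / q) * n ^ 2 / (Fintype.card ι * ε ^ 2)) ≤ ε * Fintype.card κ) :
    signMean (gramTrace ι κ n) ≤
      Fintype.card ι * (Fintype.card κ * R) ^ n * (1 + 1 / q) := by
  have : (0 : ℝ) < Fintype.card κ := by exact_mod_cast hκ
  have hK₀ : (0 : ℝ) < Fintype.card ι := hK ▸ by positivity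
  have hn₁ : (1 : ℝ) ≤ n := by exact_mod_cast Nat.one_le_iff_ne_zero.2 hn
  set P := 1 / q with hP
  have hP₀ : 0 < P := by positivity
  have hle : n * (ε / n) + (1 + ε) / R * (1 + P) + q ^ 2 / R * ((1 + P) * P) ≤ P := by
    calc _ = ((1 + q) ^ 2 + ε * (q * R + q + 1)) / R * P := by rw [hP]; field_simp; ring
      _ ≤ 1 * P := by gcongr; exact (div_le_one hR₀).2 hR
      _ = P := one_mul P
  have he : 0 ≤ ε / n := by positivity
  have he₁ : ε / n ≤ 1 := div_le_one_of_le₀ (hε₁.trans hn₁) (by positivity)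
  have hp : 0 ≤ (1 + ε) / R := by positivity
  have hr : 0 ≤ q ^ 2 / R := by positivity
  have majorant : IsLoopMajorant (Fintype.card ι) (Fintype.card κ) n
      ((1 + P) * n ^ 2 / (Fintype.card ι * ε ^ 2))
      fun k => Fintype.card ι * (Fintype.card κ * R) ^ k *
        catalanMajorant (ε / n) ((1 + ε) / R) (q ^ 2 / R) k := by
    refine isLoopMajorant_catalanMajorant (by positivity) he he₁ hp hr (by positivity) hP₀.le hle
      ?_ ?_ ?_
    · calc _ ≤ Fintype.card κ + ε * Fintype.card κ := by linarith
        _ = _ := by field_simp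
    · rw [hK]; exact le_of_eq (by field_simp)
    · exact le_of_eq (by field_simp)
  calc signMean (gramTrace ι κ n) = traceMoment ι κ {n} := by simp [traceMoment]
    _ ≤ Fintype.card ι * (Fintype.card κ * R) ^ n *
        catalanMajorant (ε / n) ((1 + ε) / R) (q ^ 2 / R) n := by
      simpa using majorant.traceMoment_le ι κ (by positivity) (L := {n}) (by simp)
    _ ≤ _ := by
      gcongr
      exact catalanMajorant_le he hp hr hle hP₀.le le_rfl

end TraceMomentBound

section SignMatrix

lemma aeval_gramTrace {ι κ : Type*} [Fintype ι] [Fintype κ] [DecidableEq ι] (x : ι → κ → ℝ)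
    (k : ℕ) : aeval (fun e => x e.1 e.2) (gramTrace ι κ k) = ((of x * (of x)ᵀ) ^ k).trace := by
  have eval_X : (mvPolynomialX ι κ ℕ).map (aeval fun e => x e.1 e.2) = of x := by
    ext; simp
  have eval_gram : (aeval fun e => x e.1 e.2).mapMatrix (genericGram ι κ) = of x * (of x)ᵀ := by
    rw [AlgHom.mapMatrix_apply, genericGram, Matrix.map_mul, transpose_map, eval_X]
  rw [gramTrace, AddMonoidHom.map_trace, ← AlgHom.mapMatrix_apply, map_pow, eval_gram]

lemma le_trace_of_mem_spectrum {n : Type*} [Fintype n] [DecidableEq n] {A : Matrix n n ℝ}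
    (hA : A.PosSemidef) {μ : ℝ} (hμ : μ ∈ spectrum ℝ A) : μ ≤ A.trace := by
  rw [hA.1.spectrum_real_eq_range_eigenvalues] at hμ
  obtain ⟨i, rfl⟩ := hμ
  rw [hA.1.trace_eq_sum_eigenvalues]
  exact single_le_sum (f := hA.1.eigenvalues) (fun j _ => hA.eigenvalues_nonneg j) (mem_univ i)

variable {K N : ℕ}

/-- The correlation matrix `S̃ᵀS̃` of the signatures. -/
noncomputable def signatureGram (s : Fin K → Fin N → ℝ) : Matrix (Fin K) (Fin K) ℝ :=
  (Stilde s)ᵀ * Stilde s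

lemma posSemidef_signatureGram (s : Fin K → Fin N → ℝ) : (signatureGram s).PosSemidef :=
  posSemidef_conjTranspose_mul_self (Stilde s)

lemma signatureGram_eq_smul (s : Fin K → Fin N → ℝ) :
    signatureGram s = (N : ℝ)⁻¹ • (of s * (of s)ᵀ) := by
  ext i j
  simp only [signatureGram, Stilde, mul_apply, transpose_apply, of_apply, Matrix.smul_apply,
    smul_eq_mul, mul_sum]
  refine sum_congr rfl fun a _ => ?_
  rw [div_mul_div_comm, Real.mul_self_sqrt N.cast_nonneg, div_eq_inv_mul]

lemma sum_trace_signatureGram_pow (n : ℕ) :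
    ∑ s : Fin K → Fin N → Bool, (signatureGram (toSign s) ^ n).trace =
      2 ^ (K * N) * (signMean (gramTrace (Fin K) (Fin N) n) / N ^ n) := by
  have expectation : 𝔼 s : Fin K → Fin N → Bool, (signatureGram (toSign s) ^ n).trace =
      signMean (gramTrace (Fin K) (Fin N) n) / N ^ n := by
    rw [signMean_apply, expect_div]
    refine (Fintype.expect_equiv (Equiv.curry (Fin K) (Fin N) Bool) _ _ fun s => ?_).symm
    rw [signatureGram_eq_smul, smul_pow, trace_smul, smul_eq_mul, inv_pow, div_eq_inv_mul,
      ← aeval_gramTrace]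
    rfl
  rw [← expectation, Fintype.expect_eq_sum_div_card]
  simp only [Fintype.card_pi, prod_const, Fintype.card_bool, card_univ, Fintype.card_fin,
    ← pow_mul, mul_comm N, Nat.cast_pow, Nat.cast_ofNat]
  field_simp

lemma card_spectrum_signatureGram_mul_pow_le {T : ℝ} (hT : 0 ≤ T) (n : ℕ) :
    Nat.card {s : Fin K → Fin N → Bool //
      ∃ μ ∈ spectrum ℝ (signatureGram (toSign s)), T ≤ μ} * T ^ n ≤
      2 ^ (K * N) * (signMean (gramTrace (Fin K) (Fin N) n) / N ^ n) := by
  classical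
  have pow_le_trace (s : Fin K → Fin N → Bool)
      (hs : ∃ μ ∈ spectrum ℝ (signatureGram (toSign s)), T ≤ μ) :
      T ^ n ≤ (signatureGram (toSign s) ^ n).trace := by
    obtain ⟨μ, hμ, hTμ⟩ := hs
    exact (pow_le_pow_left₀ hT hTμ n).trans
      (le_trace_of_mem_spectrum ((posSemidef_signatureGram _).pow n) (spectrum.pow_mem_pow _ n hμ))
  rw [← sum_trace_signatureGram_pow, Nat.card_eq_fintype_card, Fintype.card_subtype,
    ← nsmul_eq_mul]
  calc _ ≤ ∑ s with ∃ μ ∈ spectrum ℝ (signatureGram (toSign s)), T ≤ μ,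
        (signatureGram (toSign s) ^ n).trace :=
        card_nsmul_le_sum _ _ _ fun s hs => pow_le_trace s (mem_filter.1 hs).2
    _ ≤ _ := sum_le_sum_of_subset_of_nonneg (filter_subset _ _) fun s _ _ =>
        ((posSemidef_signatureGram _).pow n).trace_nonneg

lemma card_spectrum_signatureGram_le {n : ℕ} (hn : n ≠ 0) {ε g q : ℝ} (hε : 0 < ε) (hε₁ : ε ≤ 1)
    (hg : 0 < g) (hq : 0 < q) (hεg : ε * (q * ((1 + q) ^ 2 + g / 2) + q + 1) ≤ g / 2)
    (hK : (K : ℝ) = q ^ 2 * N) (hN : N ≠ 0)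
    (hnN : n + 2 * n * ((1 + 1 / q) * n ^ 2 / (K * ε ^ 2)) ≤ ε * N) :
    Nat.card {s : Fin K → Fin N → Bool //
      ∃ μ ∈ spectrum ℝ (signatureGram (toSign s)), (1 + q) ^ 2 + g ≤ μ} ≤
      K * (1 + 1 / q) * (((1 + q) ^ 2 + g / 2) / ((1 + q) ^ 2 + g)) ^ n * 2 ^ (K * N) := by
  have moment := signMean_gramTrace_le (Fin K) (Fin N) hn (ε := ε) (q := q)
    (R := (1 + q) ^ 2 + g / 2) hε hε₁ hq (by positivity) (by linarith) (by simpa using hK)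
    (by simpa using Nat.pos_of_ne_zero hN) (by simpa using hnN)
  rw [Fintype.card_fin, Fintype.card_fin, mul_pow] at moment
  rw [div_pow, mul_div_assoc', div_mul_eq_mul_div, le_div_iff₀ (by positivity)]
  calc _ ≤ 2 ^ (K * N) * (signMean (gramTrace (Fin K) (Fin N) n) / N ^ n) :=
        card_spectrum_signatureGram_mul_pow_le (by positivity) n
    _ ≤ 2 ^ (K * N) *
          (K * (N ^ n * ((1 + q) ^ 2 + g / 2) ^ n) * (1 + 1 / q) / N ^ n) := by gcongr
    _ = _ := by field_simp

lemma card_spectrum_signatureGram_le_of_le_sqrt {α α' g ε : ℝ} (hα : 0 < α) (hg : 0 < g)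
    (hε : 0 < ε) (hε₁ : ε ≤ 1) (hεg : ε * (√α' * ((1 + √α') ^ 2 + g / 2) + √α' + 1) ≤ g / 2)
    (hN : N ≠ 0) (hKl : α * N ≤ K) (hKu : K ≤ α' * N)
    (hNε : 1 + 2 * ((1 + 1 / √α) / (α * ε ^ 2)) ≤ ε * N.sqrt) :
    Nat.card {s : Fin K → Fin N → Bool //
      ∃ μ ∈ spectrum ℝ (signatureGram (toSign s)), (1 + √(K / N)) ^ 2 + g ≤ μ} ≤
      α' * N * (1 + 1 / √α) *
        (((1 + √α') ^ 2 + g / 2) / ((1 + √α') ^ 2 + g)) ^ N.sqrt * 2 ^ (K * N) := by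
  have hN₀ : (0 : ℝ) < N := by positivity
  set n := N.sqrt
  have hn₀ : n ≠ 0 := mt Nat.sqrt_eq_zero.1 hN
  set q := √(K / N) with hq_def
  have hql : √α ≤ q := Real.sqrt_le_sqrt ((le_div_iff₀ hN₀).2 hKl)
  have hqu : q ≤ √α' := Real.sqrt_le_sqrt ((div_le_iff₀ hN₀).2 hKu)
  have hsα : 0 < √α := Real.sqrt_pos.2 hα
  have hq : 0 < q := hsα.trans_le hql
  have hεq : ε * (q * ((1 + q) ^ 2 + g / 2) + q + 1) ≤ g / 2 := by
    refine le_trans ?_ hεg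
    gcongr
  have hnN : n + 2 * n * ((1 + 1 / q) * n ^ 2 / (K * ε ^ 2)) ≤ ε * N := by
    have sq_le : (n : ℝ) ^ 2 ≤ N := by exact_mod_cast N.sqrt_le'
    calc _ ≤ n + 2 * n * ((1 + 1 / √α) * N / (α * N * ε ^ 2)) := by gcongr
      _ = n * (1 + 2 * ((1 + 1 / √α) / (α * ε ^ 2))) := by field_simp
      _ ≤ n * (ε * n) := by gcongr
      _ = ε * n ^ 2 := by ring
      _ ≤ ε * N := by gcongr
  have ratio_le : ((1 + q) ^ 2 + g / 2) / ((1 + q) ^ 2 + g) ≤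
      ((1 + √α') ^ 2 + g / 2) / ((1 + √α') ^ 2 + g) := by
    have : (1 + q) ^ 2 ≤ (1 + √α') ^ 2 := by gcongr
    rw [div_le_div_iff₀ (by positivity) (by positivity)]
    nlinarith
  calc _ ≤ K * (1 + 1 / q) * (((1 + q) ^ 2 + g / 2) / ((1 + q) ^ 2 + g)) ^ n * 2 ^ (K * N) :=
        card_spectrum_signatureGram_le hn₀ hε hε₁ hg hq hεq
          (by rw [hq_def, Real.sq_sqrt (by positivity)]; field_simp) hN hnN
    _ ≤ _ := by
        have : 0 ≤ α' * N := K.cast_nonneg.trans hKu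
        gcongr

lemma exists_card_spectrum_signatureGram_le {α g : ℝ} (α' : ℝ) (hα : 0 < α) (hg : 0 < g) :
    ∃ C θ : ℝ, 0 < θ ∧ θ < 1 ∧ ∀ K N : ℕ, N ≠ 0 → α * N ≤ K → K ≤ α' * N →
      Nat.card {s : Fin K → Fin N → Bool //
        ∃ μ ∈ spectrum ℝ (signatureGram (toSign s)), (1 + √(K / N)) ^ 2 + g ≤ μ} ≤
        C * N * θ ^ N.sqrt * 2 ^ (K * N) := by
  set ε := min 1 (g / 2 / (√α' * ((1 + √α') ^ 2 + g / 2) + √α' + 1))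
  set n₀ := ⌈(1 + 2 * ((1 + 1 / √α) / (α * ε ^ 2))) / ε⌉₊
  set θ := ((1 + √α') ^ 2 + g / 2) / ((1 + √α') ^ 2 + g)
  have hε : 0 < ε := by positivity
  have hεg : ε * (√α' * ((1 + √α') ^ 2 + g / 2) + √α' + 1) ≤ g / 2 :=
    (le_div_iff₀ (by positivity)).1 (min_le_right _ _)
  have hθ₀ : 0 < θ := by positivity
  have hθ₁ : θ < 1 := (div_lt_one (by positivity)).2 (by linarith)
  refine ⟨α' * (1 + 1 / √α) + (θ ^ n₀)⁻¹, θ, hθ₀, hθ₁, fun K N hN hKl hKu => ?_⟩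
  have hN₀ : (0 : ℝ) < N := by positivity
  have hα' : 0 ≤ α' := hα.le.trans (le_of_mul_le_mul_right (hKl.trans hKu) hN₀)
  rcases lt_or_ge N.sqrt n₀ with h_small | h_large
  · have one_le : 1 ≤ (θ ^ n₀)⁻¹ * N * θ ^ N.sqrt := by
      have hN₁ : (1 : ℝ) ≤ N := by exact_mod_cast Nat.one_le_iff_ne_zero.2 hN
      calc 1 = (θ ^ n₀)⁻¹ * 1 * θ ^ n₀ := by field_simp
        _ ≤ (θ ^ n₀)⁻¹ * N * θ ^ N.sqrt := by
          gcongr ?_ * ?_ * ?_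
          exact pow_le_pow_of_le_one hθ₀.le hθ₁.le h_small.le
    calc _ ≤ 1 * (2 : ℝ) ^ (K * N) := by
          rw [one_mul]
          exact_mod_cast (Finite.card_subtype_le _).trans_eq (by simp [← pow_mul, mul_comm N])
      _ ≤ (α' * (1 + 1 / √α) + (θ ^ n₀)⁻¹) * N * θ ^ N.sqrt * 2 ^ (K * N) := by
          gcongr
          refine one_le.trans ?_
          gcongr
          exact le_add_of_nonneg_left (by positivity)
  · calc _ ≤ α' * N * (1 + 1 / √α) * θ ^ N.sqrt * 2 ^ (K * N) :=
          card_spectrum_signatureGram_le_of_le_sqrt hα hg hε (min_le_left _ _) hεg hN hKl hKu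
            ((div_le_iff₀' hε).1 (Nat.ceil_le.1 h_large))
      _ ≤ (α' * (1 + 1 / √α) + (θ ^ n₀)⁻¹) * N * θ ^ N.sqrt * 2 ^ (K * N) := by
          rw [mul_right_comm α']
          gcongr
          exact le_add_of_nonneg_right (by positivity)

end SignMatrix

lemma exists_mul_pow_sqrt_le_rpow (C a : ℝ) {θ : ℝ} (hθ₀ : 0 < θ) (hθ₁ : θ < 1) :
    ∃ C' > 0, ∀ N : ℕ, N ≠ 0 → C * N * θ ^ N.sqrt ≤ C' * (N : ℝ) ^ (-a) := by
  set m := ⌈2 * (1 + a)⌉₊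
  obtain ⟨B, hB⟩ := (tendsto_pow_const_mul_const_pow_of_abs_lt_one m
    (abs_lt.2 ⟨by linarith, hθ₁⟩)).bddAbove_range
  have hB' (n : ℕ) : (n : ℝ) ^ m * θ ^ n ≤ B := hB ⟨n, rfl⟩
  have hB₀ : 0 < B := (by positivity : 0 < ((1 : ℕ) : ℝ) ^ m * θ ^ 1).trans_le (hB' 1)
  refine ⟨(|C| + 1) * (B / θ), by positivity, fun N hN => ?_⟩
  set n := N.sqrt
  have hN₀ : (0 : ℝ) < N := by positivity
  have rpow_le : (N : ℝ) ^ (1 + a) ≤ ((n + 1 : ℕ) : ℝ) ^ m := by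
    have hN₁ : (1 : ℝ) ≤ N := by exact_mod_cast Nat.one_le_iff_ne_zero.2 hN
    have N_le : (N : ℝ) ≤ ((n + 1 : ℕ) : ℝ) ^ 2 := by exact_mod_cast N.lt_succ_sqrt'.le
    calc (N : ℝ) ^ (1 + a) ≤ (N : ℝ) ^ ((m : ℝ) / 2) :=
          Real.rpow_le_rpow_of_exponent_le hN₁ (by linarith [Nat.le_ceil (2 * (1 + a))])
      _ ≤ (((n + 1 : ℕ) : ℝ) ^ 2) ^ ((m : ℝ) / 2) := by gcongr
      _ = ((n + 1 : ℕ) : ℝ) ^ m := by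
          rw [← Real.rpow_natCast, ← Real.rpow_mul (by positivity), ← Real.rpow_natCast]
          congr 1
          push_cast
          ring
  calc C * N * θ ^ n = C * (N ^ (1 + a) * θ ^ (n + 1) / θ) * (N : ℝ) ^ (-a) := by
        have : (N : ℝ) = (N : ℝ) ^ (1 + a) * (N : ℝ) ^ (-a) := by
          rw [← Real.rpow_add hN₀, add_neg_cancel_right, Real.rpow_one]
        rw [pow_succ]
        nth_rw 1 [this]
        field_simp
    _ ≤ (|C| + 1) * (B / θ) * (N : ℝ) ^ (-a) := by
        gcongr
        · linarith [le_abs_self C]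
        · exact (mul_le_mul_of_nonneg_right rpow_le (by positivity)).trans (hB' _)

section SecondOrderRecurrence

lemma summable_norm_of_recurrence {𝕜 E : Type*} [NormedField 𝕜] [NormedAddCommGroup E]
    [NormedSpace 𝕜 E] {z : 𝕜} (hz : ‖z‖ < 1) {a b : ℕ → E} (h : ∀ t, a (t + 1) = z • a t + b t)
    (hb : Summable fun t => ‖b t‖) : Summable fun t => ‖a t‖ := by
  refine summable_of_sum_range_le (c := (‖a 0‖ + ∑' t, ‖b t‖) / (1 - ‖z‖))
    (fun t => norm_nonneg _) fun n => ?_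
  rw [le_div_iff₀ (sub_pos.2 hz)]
  have step : ∑ t ∈ range n, ‖a t‖ ≤
      ‖z‖ * ∑ t ∈ range n, ‖a t‖ + ∑' t, ‖b t‖ + ‖a 0‖ := by
    calc ∑ t ∈ range n, ‖a t‖ ≤ ∑ t ∈ range (n + 1), ‖a t‖ := by
          rw [sum_range_succ]; exact le_add_of_nonneg_right (norm_nonneg _)
      _ = ∑ t ∈ range n, ‖z • a t + b t‖ + ‖a 0‖ := by simp only [sum_range_succ', h]
      _ ≤ ∑ t ∈ range n, (‖z‖ * ‖a t‖ + ‖b t‖) + ‖a 0‖ := by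
          gcongr with t
          exact (norm_add_le _ _).trans_eq (by rw [norm_smul])
      _ ≤ _ := by
          rw [sum_add_distrib, ← mul_sum]
          gcongr
          exact hb.sum_le_tsum _ fun t _ => norm_nonneg _
  linarith

variable {τ q : ℝ}

/-- The Schur–Cohn criterion for real quadratic polynomials. -/
lemma norm_lt_one_of_sq_eq (hq₀ : 0 ≤ q) (hq₁ : q < 1) (hτ : |τ| < 1 + q) {z : ℂ}
    (hz : z ^ 2 = τ * z - q) : ‖z‖ < 1 := by
  have re_eq : z.re ^ 2 - z.im ^ 2 = τ * z.re - q := by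
    simpa [sq] using congrArg Complex.re hz
  have im_eq : 2 * z.re * z.im = τ * z.im := by
    have := congrArg Complex.im hz
    simp [sq] at this
    linarith
  rw [← abs_norm, ← sq_lt_one_iff_abs_lt_one, Complex.sq_norm, Complex.normSq_apply]
  by_cases him : z.im = 0
  · rw [him] at re_eq ⊢
    have τ_mul_le : τ * z.re ≤ |τ| * |z.re| := (le_abs_self _).trans_eq (abs_mul _ _)
    have : |z.re| < 1 := by
      by_contra! one_le
      nlinarith [sq_abs z.re]
    nlinarith [sq_abs z.re, abs_nonneg z.re]
  · have hτ_eq : 2 * z.re = τ := mul_right_cancel₀ him im_eq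
    rw [← hτ_eq] at re_eq
    nlinarith

lemma tendsto_zero_of_real_recurrence (hq₀ : 0 ≤ q) (hq₁ : q < 1) (hτ : |τ| < 1 + q) {d : ℕ → ℝ}
    (hd : ∀ t, d (t + 2) = τ * d (t + 1) - q * d t) : Tendsto d atTop (𝓝 0) := by
  obtain ⟨z, hz⟩ : ∃ z : ℂ, z ^ 2 = τ * z - q := by
    obtain ⟨δ, hδ⟩ := IsAlgClosed.exists_pow_nat_eq (τ ^ 2 - 4 * q : ℂ) two_pos
    exact ⟨(τ + δ) / 2, by linear_combination hδ / 4⟩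
  set u : ℂ := τ - z with hu_def
  have hu : u ^ 2 = τ * u - q := by rw [hu_def]; linear_combination hz
  have difference_summable : Summable fun t => ‖(d (t + 1) - z * d t : ℂ)‖ := by
    refine summable_norm_of_recurrence (b := 0) (norm_lt_one_of_sq_eq hq₀ hq₁ hτ hu)
      (fun t => ?_) (by simp [summable_zero])
    rw [hd, smul_eq_mul, hu_def]
    push_cast
    simp only [Pi.zero_apply]
    linear_combination (-d t : ℂ) * hz
  have summable : Summable fun t => ‖(d t : ℂ)‖ :=
    summable_norm_of_recurrence (norm_lt_one_of_sq_eq hq₀ hq₁ hτ hz)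
      (b := fun t => (d (t + 1) - z * d t : ℂ)) (fun t => by simp) difference_summable
  simp only [Complex.norm_real] at summable
  exact tendsto_zero_iff_norm_tendsto_zero.2 summable.tendsto_atTop_zero

theorem tendsto_zero_of_isHermitian_recurrence {n : Type*} [Fintype n] [DecidableEq n]
    {A : Matrix n n ℝ} (hA : A.IsHermitian) (hq₀ : 0 ≤ q) (hq₁ : q < 1)
    (hspec : ∀ μ ∈ spectrum ℝ A, |μ| < 1 + q) {D : ℕ → n → ℝ}
    (hD : ∀ t, D (t + 2) = A *ᵥ D (t + 1) - q • D t) : Tendsto D atTop (𝓝 0) := by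
  obtain ⟨U, U_mul, star_U_mul⟩ : ∃ U : Matrix n n ℝ,
      U * star U = 1 ∧ star U * A = diagonal hA.eigenvalues * star U := by
    refine ⟨hA.eigenvectorUnitary, Unitary.coe_mul_star_self _, ?_⟩
    refine (congrArg (star (hA.eigenvectorUnitary : Matrix n n ℝ) * ·) hA.spectral_theorem).trans ?_
    rw [Unitary.conjStarAlgAut_apply, mul_assoc, ← mul_assoc (star _),
      Unitary.coe_star_mul_self, one_mul]
    rfl
  have coords : Tendsto (fun t => star U *ᵥ D t) atTop (𝓝 0) := by
    refine tendsto_pi_nhds.2 fun i => ?_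
    refine tendsto_zero_of_real_recurrence hq₀ hq₁
      (hspec _ (hA.eigenvalues_mem_spectrum_real i)) fun t => ?_
    rw [hD, mulVec_sub, mulVec_mulVec, star_U_mul, ← mulVec_mulVec, mulVec_smul]
    simp only [Pi.sub_apply, Pi.smul_apply, mulVec_diagonal, smul_eq_mul]
  have back : Tendsto (fun t => U *ᵥ (star U *ᵥ D t)) atTop (𝓝 (U *ᵥ 0)) :=
    ((continuous_const.matrix_mulVec continuous_id).tendsto _).comp coords
  simpa [mulVec_mulVec, U_mul] using back

end SecondOrderRecurrence

section ApproxBP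

variable {K N : ℕ} (s : Fin K → Fin N → ℝ) (y : Fin N → ℝ)

lemma approxBP_succ_fst (lam mu : ℝ) (t : ℕ) :
    (approxBP lam mu s y (t + 1)).1 = (1 / (lam * mu)) • (approxBP lam mu s y t).1 +
      (1 / mu) • ((Stilde s)ᵀ *ᵥ (approxBP lam mu s y t).2) := by
  ext i
  simp only [approxBP, Pi.add_apply, Pi.smul_apply, smul_eq_mul, mulVec, dotProduct,
    transpose_apply, Stilde, of_apply, mul_sum]
  congr 1
  exact sum_congr rfl fun b _ => by ring

lemma approxBP_succ_snd (lam mu : ℝ) (t : ℕ) :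
    (approxBP lam mu s y (t + 1)).2 = y + ((K / N : ℝ) / (lam * mu)) • (approxBP lam mu s y t).2 -
      (1 / lam) • (Stilde s *ᵥ (approxBP lam mu s y (t + 1)).1) := by
  ext a
  simp only [approxBP, Pi.add_apply, Pi.sub_apply, Pi.smul_apply, smul_eq_mul, mulVec, dotProduct,
    Stilde, of_apply, mul_sum]
  congr 1
  exact sum_congr rfl fun k _ => by ring

lemma approxBP_add_two_fst (lam mu : ℝ) (t : ℕ) :
    (approxBP lam mu s y (t + 2)).1 =
      ((1 + K / N) / (lam * mu)) • (approxBP lam mu s y (t + 1)).1 -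
      (1 / (lam * mu)) • (signatureGram s *ᵥ (approxBP lam mu s y (t + 1)).1) -
      (K / N / (lam * mu) ^ 2) • (approxBP lam mu s y t).1 +
      (1 / mu) • ((Stilde s)ᵀ *ᵥ y) := by
  have chips : (1 / mu) • ((Stilde s)ᵀ *ᵥ (approxBP lam mu s y t).2) =
      (approxBP lam mu s y (t + 1)).1 - (1 / (lam * mu)) • (approxBP lam mu s y t).1 := by
    rw [approxBP_succ_fst, add_sub_cancel_left]
  rw [approxBP_succ_fst s y lam mu (t + 1), approxBP_succ_snd, mulVec_sub, mulVec_add, mulVec_smul,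
    mulVec_smul, mulVec_mulVec, ← signatureGram, smul_sub, smul_add, smul_comm (1 / mu), chips]
  module

lemma signatureGram_mulVec_mmseEstimate {σ : ℝ} (hσ : σ ≠ 0) :
    signatureGram s *ᵥ mmseEstimate σ s y = (Stilde s)ᵀ *ᵥ y - σ ^ 2 • mmseEstimate σ s y := by
  have posDef : (σ ^ 2 • (1 : Matrix (Fin K) (Fin K) ℝ) + signatureGram s).PosDef :=
    (PosDef.one.smul (by positivity)).add_posSemidef (posSemidef_signatureGram s)
  have normal : (σ ^ 2 • (1 : Matrix (Fin K) (Fin K) ℝ) + signatureGram s) *ᵥ mmseEstimate σ s y =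
      (Stilde s)ᵀ *ᵥ y := by
    rw [mmseEstimate, ← signatureGram, mulVec_mulVec,
      mul_nonsing_inv _ ((isUnit_iff_isUnit_det _).1 posDef.isUnit), one_mulVec]
  rw [← normal, add_mulVec, smul_mulVec, one_mulVec, add_sub_cancel_left]

lemma abs_lt_of_mem_spectrum_sub_signatureGram {p σ : ℝ} (hp : 1 < p) (hβ : K / N < p)
    (heq : (p - 1) * (p - K / N) = σ ^ 2 * p)
    (hspec : ∀ ν ∈ spectrum ℝ (signatureGram s), ν < 2 * (1 + K / N) + σ ^ 2) :
    ∀ ξ ∈ spectrum ℝ (p⁻¹ • (algebraMap ℝ _ (1 + K / N : ℝ) - signatureGram s)),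
      |ξ| < 1 + K / N / p ^ 2 := by
  have hp₀ : 0 < p := one_pos.trans hp
  intro ξ hξ
  have hξ' : p * ξ ∈ spectrum ℝ (algebraMap ℝ _ (1 + K / N : ℝ) - signatureGram s) := by
    rw [← spectrum.smul_mem_smul_iff (r := (Units.mk0 p hp₀.ne')⁻¹)]
    simpa [Units.smul_def, hp₀.ne'] using hξ
  rw [← spectrum.singleton_sub_eq] at hξ'
  obtain ⟨_, rfl, ν, hν, hνξ : 1 + (K / N : ℝ) - ν = p * ξ⟩ := hξ'
  have hν₀ : 0 ≤ ν :=
    (posSemidef_iff_isHermitian_and_spectrum_nonneg.1 (posSemidef_signatureGram s)).2 hν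
  have hν_lt := hspec ν hν
  have p_mul : p * (1 + K / N / p ^ 2) = p + K / N / p := by field_simp
  refine lt_of_mul_lt_mul_left ?_ hp₀.le
  rw [← abs_of_pos hp₀, ← abs_mul, abs_of_pos hp₀, ← hνξ, abs_lt, p_mul]
  have edge : p + K / N / p = 1 + K / N + σ ^ 2 := by
    field_simp
    linear_combination heq
  have gap : 0 < σ ^ 2 * p := heq ▸ mul_pos (sub_pos.2 hp) (sub_pos.2 hβ)
  have : 0 < σ ^ 2 := pos_of_mul_pos_left gap hp₀.le
  rw [edge]
  constructor <;> linarith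

theorem tendsto_approxBP_fst {lam mu σ : ℝ} (hσ : σ ≠ 0) (hp : 1 < lam * mu)
    (hβ : K / N < lam * mu) (heq : (lam * mu - 1) * (lam * mu - K / N) = σ ^ 2 * (lam * mu))
    (hspec : ∀ ν ∈ spectrum ℝ (signatureGram s), ν < 2 * (1 + K / N) + σ ^ 2) :
    Tendsto (fun t => (approxBP lam mu s y t).1) atTop (𝓝 (lam • mmseEstimate σ s y)) := by
  set p := lam * mu with hp_def
  set m := mmseEstimate σ s y
  have hp₀ : 0 < p := one_pos.trans hp
  have fixed_point : lam • m =
      ((1 + K / N) / p) • lam • m - (1 / p) • (signatureGram s *ᵥ lam • m) -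
        (K / N / p ^ 2) • lam • m + (1 / mu) • ((Stilde s)ᵀ *ᵥ y) := by
    have mu_inv : 1 / mu = lam / p := by
      rw [hp_def]
      have := left_ne_zero_of_mul hp₀.ne'
      have := right_ne_zero_of_mul hp₀.ne'
      field_simp
    have coeff : (1 + K / N) / p + σ ^ 2 / p - K / N / p ^ 2 = 1 := by
      field_simp
      linear_combination -heq
    rw [mulVec_smul, signatureGram_mulVec_mmseEstimate s y hσ, mu_inv]
    nth_rw 1 [← one_smul ℝ (lam • m), ← coeff]
    module
  refine tendsto_sub_nhds_zero_iff.1 (tendsto_zero_of_isHermitian_recurrence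
    (A := p⁻¹ • (algebraMap ℝ _ (1 + K / N : ℝ) - signatureGram s)) (q := K / N / p ^ 2)
    ?_ (by positivity) ?_ (abs_lt_of_mem_spectrum_sub_signatureGram s hp hβ heq hspec) fun t => ?_)
  · rw [Algebra.algebraMap_eq_smul_one]
    exact ((isHermitian_one.smul (IsSelfAdjoint.all _)).sub
      (posSemidef_signatureGram s).1).smul (IsSelfAdjoint.all _)
  · rw [div_lt_one (by positivity)]
    nlinarith
  · rw [approxBP_add_two_fst]
    nth_rw 1 [fixed_point]
    rw [smul_mulVec, sub_mulVec, Algebra.algebraMap_eq_smul_one, smul_mulVec, one_mulVec,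
      mulVec_sub]
    module

theorem tendsto_approxBP_one_add_inv_fst {σ L : ℝ} (hσ : σ ≠ 0) (hL : 0 < L)
    (hfix : 1 / L = σ ^ 2 + K / N / (1 + L))
    (hspec : ∀ ν ∈ spectrum ℝ (signatureGram s), ν < (1 + √(K / N)) ^ 2 + σ ^ 2) :
    Tendsto (fun t => (approxBP (1 + L) (1 / L) s y t).1) atTop
      (𝓝 ((1 + L) • mmseEstimate σ s y)) := by
  have sub_ratio : (1 + L) * (1 / L) - K / N = σ ^ 2 * (1 + L) := by
    rw [hfix]
    field_simp
    ring
  have sub_one : (1 + L) * (1 / L) - 1 = 1 / L := by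
    field_simp
    ring
  have edge_le : (1 + √(K / N : ℝ)) ^ 2 ≤ 2 * (1 + K / N) := by
    nlinarith [sq_nonneg (1 - √(K / N : ℝ)), Real.sq_sqrt (by positivity : 0 ≤ (K / N : ℝ))]
  refine tendsto_approxBP_fst s y hσ (sub_pos.1 ?_) (sub_pos.1 ?_) ?_ fun ν hν =>
    (hspec ν hν).trans_le (by gcongr)
  · rw [sub_one]; positivity
  · rw [sub_ratio]; positivity
  · rw [sub_one, sub_ratio]; ring

end ApproxBP

lemma one_sub_mul_two_pow_le_card {K N : ℕ} {p q : (Fin K → Fin N → Bool) → Prop} {x : ℝ}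
    (hp : Nat.card {s // p s} ≤ x * 2 ^ (K * N)) (h : ∀ s, ¬p s → q s) :
    (1 - x) * 2 ^ (K * N) ≤ Nat.card {s // q s} := by
  have cover : 2 ^ (K * N) ≤ Nat.card {s // p s} + Nat.card {s // q s} := by
    calc 2 ^ (K * N) = ({s | p s} ∪ {s | q s}).ncard := by
          rw [Set.eq_univ_of_forall (s := {s | p s} ∪ {s | q s}) fun s =>
            or_iff_not_imp_left.2 (h s), Set.ncard_univ]
          simp [← pow_mul, mul_comm N]
      _ ≤ Nat.card {s // p s} + Nat.card {s // q s} := Set.ncard_union_le _ _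
  rify at cover
  linarith

/-- **Proposition 1.** With K = ⌈αN⌉ and Λ = Λ_N the unique positive
solution of 1/Λ = σ² + (K/N)/(1+Λ), the approximate BP iteration (with λ* = 1+Λ,
λ̂* = 1/Λ) converges with probability at least 1 − C·N^{−a} over the i.i.d. uniform ±1
signatures, and G^{(∞)}/(1+Λ) is the MMSE estimate, for every y. -/
theorem approx_bp_convergence_and_correctness (σ α a : ℝ)
    (hσ : 0 < σ) (hα : 0 < α) (ha : 0 < a)
    (Lam : ℕ → ℝ)
    (hLam : ∀ N : ℕ, 1 ≤ N → 0 < Lam N ∧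
      1 / Lam N = σ ^ 2 + ((⌈α * (N : ℝ)⌉₊ : ℝ) / (N : ℝ)) / (1 + Lam N)) :
    ∃ C : ℝ, 0 < C ∧ ∀ N : ℕ, 1 ≤ N →
      (1 - C * (N : ℝ) ^ (-a)) * 2 ^ (⌈α * (N : ℝ)⌉₊ * N) ≤
        (Nat.card {s : Fin ⌈α * (N : ℝ)⌉₊ → Fin N → Bool //
          ∀ y : Fin N → ℝ, ∃ Ginf : Fin ⌈α * (N : ℝ)⌉₊ → ℝ,
            Filter.Tendsto
              (fun t => (approxBP (1 + Lam N) (1 / Lam N) (toSign s) y t).1)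
              Filter.atTop (nhds Ginf) ∧
            (1 / (1 + Lam N)) • Ginf = mmseEstimate σ (toSign s) y} : ℝ) := by
  obtain ⟨C, θ, hθ₀, hθ₁, card_large_le⟩ :=
    exists_card_spectrum_signatureGram_le (α + 1) hα (pow_pos hσ 2)
  obtain ⟨C', hC', rate_le⟩ := exists_mul_pow_sqrt_le_rpow C a hθ₀ hθ₁
  refine ⟨C', hC', fun N hN => ?_⟩
  obtain ⟨hΛ, hfix⟩ := hLam N hN
  have hN₀ : N ≠ 0 := Nat.one_le_iff_ne_zero.1 hN
  have hN₁ : (1 : ℝ) ≤ N := by exact_mod_cast hN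
  have hK : (⌈α * N⌉₊ : ℝ) ≤ (α + 1) * N := by
    linarith [Nat.ceil_lt_add_one (a := α * N) (by positivity)]
  have card_bad_le := (card_large_le _ N hN₀ (Nat.le_ceil _) hK).trans
    (mul_le_mul_of_nonneg_right (rate_le N hN₀) (by positivity))
  refine one_sub_mul_two_pow_le_card card_bad_le fun s hs y =>
    ⟨(1 + Lam N) • mmseEstimate σ (toSign s) y, ?_, ?_⟩
  · exact tendsto_approxBP_one_add_inv_fst (toSign s) y hσ.ne' hΛ hfix
      fun ν hν => not_le.1 fun h => hs ⟨ν, hν, h⟩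
  · rw [smul_smul, one_div_mul_cancel (by positivity), one_smul]
end

section
/- Fix integers K ≥ 1 and N ≥ 1, σ > 0, a matrix s with entries s_{ia} ∈ {+1, −1}, and y ∈ ℝ^N. Then after one BP iteration, for every i ∈ [K]: G_i^{(1)} = (1/(σ² + (K−1)/N))·(1/√N)·Σ_{b=1}^N s_{ib}·y_b and L_i^{(1)} = 1 + 1/(σ² + (K−1)/N); consequently the BP estimate after the first iteration, x̂_i^{(1)} = G_i^{(1)}/L_i^{(1)} = (1/(1 + σ² + (K−1)/N))·(1/√N)·Σ_{b=1}^N s_{ib}·y_b, is a positive multiple (independent of i) of the matched filter output (1/√N)·Σ_{b=1}^N s_{ib}·y_b. -/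
open Finset

namespace BP

variable {K N : ℕ}

/-- Chip-to-user variance message λ̂_{a→i} computed from user-to-chip messages `lam`. -/
noncomputable def lamHat (σ : ℝ) (s : Fin K → Fin N → ℝ)
    (lam : Fin K → Fin N → ℝ) (a : Fin N) (i : Fin K) : ℝ :=
  σ ^ 2 + (1 / (N : ℝ)) * ∑ k ∈ Finset.univ.erase i, s k a ^ 2 / lam k a

/-- User-to-chip variance messages λ^{(t)}_{i→a}. -/
noncomputable def lam (σ : ℝ) (s : Fin K → Fin N → ℝ) : ℕ → Fin K → Fin N → ℝ
  | 0 => fun _ _ => 1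
  | t + 1 => fun i a =>
      1 + (1 / (N : ℝ)) * ∑ b ∈ Finset.univ.erase a,
        s i b ^ 2 / lamHat σ s (lam σ s t) b i

/-- Chip-to-user mean message γ̂_{a→i} computed from time-`t` messages. -/
noncomputable def gamHat (s : Fin K → Fin N → ℝ) (y : Fin N → ℝ)
    (lamt gamt : Fin K → Fin N → ℝ) (a : Fin N) (i : Fin K) : ℝ :=
  y a - (1 / Real.sqrt N) * ∑ k ∈ Finset.univ.erase i, (s k a / lamt k a) * gamt k a

/-- User-to-chip mean messages γ^{(t)}_{i→a}. -/
noncomputable def gam (σ : ℝ) (s : Fin K → Fin N → ℝ) (y : Fin N → ℝ) :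
    ℕ → Fin K → Fin N → ℝ
  | 0 => fun _ _ => 0
  | t + 1 => fun i a =>
      (1 / Real.sqrt N) * ∑ b ∈ Finset.univ.erase a,
        (s i b / lamHat σ s (lam σ s t) b i) *
          gamHat s y (lam σ s t) (gam σ s y t) b i

/-- BP output G_i^{(t)} (with the convention G_i^{(0)} = 0). -/
noncomputable def Gout (σ : ℝ) (s : Fin K → Fin N → ℝ) (y : Fin N → ℝ) :
    ℕ → Fin K → ℝ
  | 0 => fun _ => 0
  | t + 1 => fun i =>
      (1 / Real.sqrt N) * ∑ b : Fin N,
        (s i b / lamHat σ s (lam σ s t) b i) *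
          gamHat s y (lam σ s t) (gam σ s y t) b i

/-- BP output L_i^{(t)} (with the convention L_i^{(0)} = 1). -/
noncomputable def Lout (σ : ℝ) (s : Fin K → Fin N → ℝ) : ℕ → Fin K → ℝ
  | 0 => fun _ => 1
  | t + 1 => fun i =>
      1 + (1 / (N : ℝ)) * ∑ b : Fin N, s i b ^ 2 / lamHat σ s (lam σ s t) b i

end BP

/-! At time `0` every `λ` equals `1` and every `γ` equals `0`, so no interference is cancelled
yet: the mean message `γ̂_{b→i}` is the observation `y_b`, and the variance message `λ̂_{b→i}` is
the noise level plus the interference power at chip `b`. When that power is the same at all chips,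
the variance factors out of the sums defining `G_i` and `L_i`. -/

namespace BP

variable {K N : ℕ} {σ : ℝ} {s : Fin K → Fin N → ℝ} {i : Fin K}

/-- The matched filter output `s̃_iᵀ z` of user `i` on the received vector `z`. -/
noncomputable def matchedFilter (s : Fin K → Fin N → ℝ) (z : Fin N → ℝ) (i : Fin K) : ℝ :=
  (1 / Real.sqrt N) * ∑ b : Fin N, s i b * z b

/-- The energy `‖s̃_i‖²` of the normalised spreading sequence of user `i`. -/
noncomputable def energy (s : Fin K → Fin N → ℝ) (i : Fin K) : ℝ :=
  (1 / (N : ℝ)) * ∑ b : Fin N, s i b ^ 2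

/-- The total power that the users other than `i` contribute at chip `a`, with the normalisation
`1 / √N` of the spreading sequences and unit symbol variance. -/
noncomputable def interference (s : Fin K → Fin N → ℝ) (a : Fin N) (i : Fin K) : ℝ :=
  (1 / (N : ℝ)) * ∑ k ∈ univ.erase i, s k a ^ 2

theorem energy_nonneg (s : Fin K → Fin N → ℝ) (i : Fin K) : 0 ≤ energy s i := by
  unfold energy
  positivity

theorem energy_eq_of_sq_eq {p : ℝ} (hN : N ≠ 0) (hp : ∀ b, s i b ^ 2 = p) :
    energy s i = p := by
  have hN' : (N : ℝ) ≠ 0 := Nat.cast_ne_zero.mpr hN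
  simp [energy, hp, hN']

theorem interference_eq_of_sq_eq {p : ℝ} {a : Fin N} (hp : ∀ k ≠ i, s k a ^ 2 = p) :
    interference s a i = ((K : ℝ) - 1) / N * p := by
  have hsum : ∑ k ∈ univ.erase i, s k a ^ 2 = ((K : ℝ) - 1) * p := by
    rw [sum_congr rfl fun k hk ↦ hp k (ne_of_mem_erase hk), sum_const, nsmul_eq_mul,
      cast_card_erase_of_mem (mem_univ i), card_univ, Fintype.card_fin]
  rw [interference, hsum]
  ring

theorem lamHat_lam_zero (σ : ℝ) (s : Fin K → Fin N → ℝ) (a : Fin N) (i : Fin K) :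
    lamHat σ s (lam σ s 0) a i = σ ^ 2 + interference s a i := by
  simp only [lamHat, lam, interference, div_one]

theorem gamHat_gam_zero (σ : ℝ) (s : Fin K → Fin N → ℝ) (y : Fin N → ℝ)
    (lamt : Fin K → Fin N → ℝ) (a : Fin N) (i : Fin K) :
    gamHat s y lamt (gam σ s y 0) a i = y a := by
  simp only [gamHat, gam, mul_zero, sum_const_zero, sub_zero]

theorem Gout_succ_of_lamHat_eq {t : ℕ} {v : ℝ} (y : Fin N → ℝ)
    (hv : ∀ b, lamHat σ s (lam σ s t) b i = v) :
    Gout σ s y (t + 1) i =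
      (1 / v) * matchedFilter s (fun b ↦ gamHat s y (lam σ s t) (gam σ s y t) b i) i := by
  simp only [Gout, matchedFilter, hv, div_mul_eq_mul_div, ← sum_div]
  ring

theorem Lout_succ_of_lamHat_eq {t : ℕ} {v : ℝ}
    (hv : ∀ b, lamHat σ s (lam σ s t) b i = v) :
    Lout σ s (t + 1) i = 1 + energy s i / v := by
  simp only [Lout, energy, hv, ← sum_div, mul_div_assoc]

end BP

theorem bp_first_iteration_is_matched_filter_general
    {K N : ℕ} {σ : ℝ} {s : Fin K → Fin N → ℝ} {i : Fin K} {E I : ℝ}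
    (hE : BP.energy s i = E) (hI : ∀ a, BP.interference s a i = I) (hpos : 0 < σ ^ 2 + I)
    (y : Fin N → ℝ) :
    BP.Gout σ s y 1 i = (1 / (σ ^ 2 + I)) * BP.matchedFilter s y i ∧
      BP.Lout σ s 1 i = 1 + E / (σ ^ 2 + I) ∧
      BP.Gout σ s y 1 i / BP.Lout σ s 1 i =
        (1 / (E + σ ^ 2 + I)) * BP.matchedFilter s y i ∧
      0 < 1 / (E + σ ^ 2 + I) := by
  have hlamHat (b) : BP.lamHat σ s (BP.lam σ s 0) b i = σ ^ 2 + I := by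
    rw [BP.lamHat_lam_zero, hI]
  have hG : BP.Gout σ s y 1 i = (1 / (σ ^ 2 + I)) * BP.matchedFilter s y i := by
    simpa only [BP.gamHat_gam_zero] using BP.Gout_succ_of_lamHat_eq y hlamHat
  have hL : BP.Lout σ s 1 i = 1 + E / (σ ^ 2 + I) := by
    rw [BP.Lout_succ_of_lamHat_eq hlamHat, hE]
  have hEpos : 0 < E + σ ^ 2 + I := by
    linarith [BP.energy_nonneg s i]
  refine ⟨hG, hL, ?_, one_div_pos.mpr hEpos⟩
  have hL' : BP.Lout σ s 1 i = (E + σ ^ 2 + I) / (σ ^ 2 + I) := by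
    rw [hL, one_add_div hpos.ne']
    ring
  rw [hG, hL']
  field_simp

/-- After one BP iteration, the outputs are
G_i^{(1)} = (1/(σ²+(K−1)/N))·(1/√N)·Σ_b s_{ib} y_b and L_i^{(1)} = 1 + 1/(σ²+(K−1)/N),
so the BP estimate G_i^{(1)}/L_i^{(1)} is the positive multiple 1/(1+σ²+(K−1)/N)
(independent of i) of the matched filter output (1/√N)·Σ_b s_{ib} y_b. -/
theorem bp_first_iteration_is_matched_filter
    (K N : ℕ) (hK : 1 ≤ K) (hN : 1 ≤ N) (σ : ℝ) (hσ : 0 < σ)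
    (s : Fin K → Fin N → ℝ) (hs : ∀ i a, s i a = 1 ∨ s i a = -1)
    (y : Fin N → ℝ) :
    ∀ i : Fin K,
      BP.Gout σ s y 1 i =
        (1 / (σ ^ 2 + ((K : ℝ) - 1) / (N : ℝ))) *
          ((1 / Real.sqrt N) * ∑ b : Fin N, s i b * y b) ∧
      BP.Lout σ s 1 i = 1 + 1 / (σ ^ 2 + ((K : ℝ) - 1) / (N : ℝ)) ∧
      BP.Gout σ s y 1 i / BP.Lout σ s 1 i =
        (1 / (1 + σ ^ 2 + ((K : ℝ) - 1) / (N : ℝ))) *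
          ((1 / Real.sqrt N) * ∑ b : Fin N, s i b * y b) ∧
      0 < 1 / (1 + σ ^ 2 + ((K : ℝ) - 1) / (N : ℝ)) := by
  intro i
  have hsq (k a) : s k a ^ 2 = 1 := sq_eq_one_iff.mpr (hs k a)
  have hI (a) : BP.interference s a i = ((K : ℝ) - 1) / N := by
    rw [BP.interference_eq_of_sq_eq fun k _ ↦ hsq k a, mul_one]
  have hpos : 0 < σ ^ 2 + ((K : ℝ) - 1) / N := by
    have hK' : 0 ≤ (K : ℝ) - 1 := sub_nonneg.mpr (Nat.one_le_cast.mpr hK)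
    positivity
  exact bp_first_iteration_is_matched_filter_general
    (BP.energy_eq_of_sq_eq (Nat.one_le_iff_ne_zero.mp hN) (hsq i)) hI hpos y
end
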